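/- arXiv:2011.02393 — 2 statements merged into one kernel-verified Lean document; each statement's English description precedes it below -/
import Mathlib

section
/- For every integer w ≥ 4, with u = w−2 and v = w−1, ∑_{a+b+c=w, a≥2, b,c≥1} ζ(ā,b̄,c) = ζ(1̄,1,u) − ζ(1̄,1,ū) + ζ(1̄,v) − ζ(1̄,v̄) + ζ(2̄,u) − ζ(2̄,ū) + ζ(w̄). -/
open Filter

/-- Depth-1 Euler sum `ζ(s; e) = ∑_{n ≥ 1} eⁿ / nˢ`,
defined as the limit of partial sums. `e = 1` gives `ζ(s)`, `e = -1` gives `ζ(s̄)`. -/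
noncomputable def eulerSum1 (s : ℕ) (e : ℝ) : ℝ :=
  limUnder atTop (fun N : ℕ =>
    ∑ n ∈ Finset.Icc 1 N, e ^ n / (n : ℝ) ^ s)

/-- Depth-2 Euler sum `ζ(s₁, s₂; e₁, e₂) = ∑_{n₁ > n₂ ≥ 1} e₁^{n₁} e₂^{n₂} / (n₁^{s₁} n₂^{s₂})`,
defined as the limit of iterated partial sums. A bar over an argument means the
corresponding sign is `-1`. -/
noncomputable def eulerSum2 (s₁ s₂ : ℕ) (e₁ e₂ : ℝ) : ℝ :=
  limUnder atTop (fun N : ℕ =>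
    ∑ n₁ ∈ Finset.Icc 1 N, ∑ n₂ ∈ Finset.Ico 1 n₁,
      e₁ ^ n₁ * e₂ ^ n₂ / ((n₁ : ℝ) ^ s₁ * (n₂ : ℝ) ^ s₂))

/-- Depth-3 Euler sum
`ζ(s₁, s₂, s₃; e₁, e₂, e₃) = ∑_{n₁ > n₂ > n₃ ≥ 1} e₁^{n₁} e₂^{n₂} e₃^{n₃} / (n₁^{s₁} n₂^{s₂} n₃^{s₃})`. -/
noncomputable def eulerSum3 (s₁ s₂ s₃ : ℕ) (e₁ e₂ e₃ : ℝ) : ℝ :=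
  limUnder atTop (fun N : ℕ =>
    ∑ n₁ ∈ Finset.Icc 1 N, ∑ n₂ ∈ Finset.Ico 1 n₁, ∑ n₃ ∈ Finset.Ico 1 n₂,
      e₁ ^ n₁ * e₂ ^ n₂ * e₃ ^ n₃ / ((n₁ : ℝ) ^ s₁ * (n₂ : ℝ) ^ s₂ * (n₃ : ℝ) ^ s₃))

/-- Depth-1 multiple T-value `T(s) = 2 ∑_{m odd, m ≥ 1} 1 / mˢ`. -/
noncomputable def tValue1 (s : ℕ) : ℝ :=
  limUnder atTop (fun N : ℕ =>
    ∑ m ∈ Finset.Icc 1 N, if m % 2 = 1 then 2 / (m : ℝ) ^ s else 0)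

/-- Depth-2 multiple T-value
`T(s₁, s₂) = ∑_{m₁ > m₂ > 0, m₁ even, m₂ odd} 4 / (m₁^{s₁} m₂^{s₂})`. -/
noncomputable def tValue2 (s₁ s₂ : ℕ) : ℝ :=
  limUnder atTop (fun N : ℕ =>
    ∑ m₁ ∈ Finset.Icc 1 N, ∑ m₂ ∈ Finset.Ico 1 m₁,
      if m₁ % 2 = 0 ∧ m₂ % 2 = 1 then 4 / ((m₁ : ℝ) ^ s₁ * (m₂ : ℝ) ^ s₂) else 0)

/-- Depth-3 multiple T-value
`T(s₁, s₂, s₃) = ∑_{m₁ > m₂ > m₃ > 0, m₁ odd, m₂ even, m₃ odd} 8 / (m₁^{s₁} m₂^{s₂} m₃^{s₃})`. -/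
noncomputable def tValue3 (s₁ s₂ s₃ : ℕ) : ℝ :=
  limUnder atTop (fun N : ℕ =>
    ∑ m₁ ∈ Finset.Icc 1 N, ∑ m₂ ∈ Finset.Ico 1 m₁, ∑ m₃ ∈ Finset.Ico 1 m₂,
      if m₁ % 2 = 1 ∧ m₂ % 2 = 0 ∧ m₃ % 2 = 1 then
        8 / ((m₁ : ℝ) ^ s₁ * (m₂ : ℝ) ^ s₂ * (m₃ : ℝ) ^ s₃) else 0)

/-!
Cut all sums off at indices `< M`. For fixed `n₁ > n₂ > n₃` the sum of `n₁⁻ᵃ n₂⁻ᵇ n₃⁻ᶜ` over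
`a + b + c = w`, `a ≥ 2`, is geometric in each variable, and partial fractions turn it into three
terms, one for each variable, in which only that variable `n` carries a high power. Writing the
other two relative to `n`, the left-hand side becomes `∑ n, n ^ (2 - w) * tripleKernel M n`. On the
right-hand side the three pairs of sums are, up to a depth one term, the sums over `n ≤ l ≤ k` of
`(-1)ᵏ / (k l n ^ (w - 2))` with and without the sign `(-1)ⁿ`, so it equals
`∑ n, n ^ (2 - w) * tailKernel M n`.

The two kernels differ for finite `M` but have the same limit as `M → ∞`. With
`c = ∑_{j < k} (-1)^(j + k) / (j k)`, this rests on evaluating the series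
`∑ k, (-1)ᵏ (∑_{j < k} (-1)ʲ / j) / (k + n)` by a recursion on `n` that starts from `c`. Both
kernels are `O((log n)²)` uniformly in `M`, so Tannery's theorem lets the difference of the two
sides tend to `0`.
-/

open scoped Topology

/-! ### Sums over intervals -/

lemma sum_Ico_eq_sub_of_le {E : Type*} [AddCommGroup E] (f : ℕ → E) {a b c : ℕ} (hab : a ≤ b)
    (hbc : b ≤ c) :
    ∑ k ∈ Finset.Ico b c, f k = ∑ k ∈ Finset.Ico a c, f k - ∑ k ∈ Finset.Ico a b, f k :=
  eq_sub_of_add_eq' (Finset.sum_Ico_consecutive f hab hbc)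

lemma sum_Ico_add_eq_sub {E : Type*} [AddCommGroup E] (f : ℕ → E) (n : ℕ) {K : ℕ} (hK : 1 ≤ K) :
    ∑ k ∈ Finset.Ico 1 K, f (k + n)
      = ∑ k ∈ Finset.Ico 1 (K + n), f k - ∑ k ∈ Finset.Ico 1 (n + 1), f k := by
  rw [Finset.sum_Ico_add' f, add_comm 1 n, sum_Ico_eq_sub_of_le f n.succ_pos (by omega)]

lemma sum_Ico_succ_eq_sum_Ico_one_add {E : Type*} [AddCommMonoid E] (f : ℕ → E) {n M : ℕ}
    (h : n ≤ M) :
    ∑ k ∈ Finset.Ico (n + 1) M, f k = ∑ k ∈ Finset.Ico 1 (M - n), f (k + n) := by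
  rw [Finset.sum_Ico_add' f, Nat.sub_add_cancel h, add_comm 1 n]

lemma sum_Ico_succ_reflect {E : Type*} [AddCommMonoid E] (f : ℕ → E) (a b : ℕ) :
    ∑ k ∈ Finset.Ico (a + 1) b, f (b - k) = ∑ k ∈ Finset.Ico 1 (b - a), f k := by
  rw [Finset.sum_Ico_reflect f (a + 1) b.le_succ, Nat.add_sub_cancel_left, Nat.add_sub_add_right]

lemma sum_Ico_mul_sum_Ico {R : Type*} [CommSemiring R] (f g : ℕ → R) (a M : ℕ) :
    ∑ k ∈ Finset.Ico a M, f k * ∑ j ∈ Finset.Ico a k, g j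
      = ∑ j ∈ Finset.Ico a M, g j * ∑ k ∈ Finset.Ico (j + 1) M, f k := by
  simp only [Finset.mul_sum]
  rw [Finset.sum_Ico_Ico_comm' a M]
  exact Finset.sum_congr rfl fun k _ => Finset.sum_congr rfl fun j _ => mul_comm _ _

lemma sum_comm_Ico_triple {ι E : Type*} [AddCommMonoid E] (I : Finset ι)
    (F : ι → ℕ → ℕ → ℕ → E) (M : ℕ) :
    ∑ i ∈ I, ∑ x ∈ Finset.Ico 1 M, ∑ y ∈ Finset.Ico 1 x, ∑ z ∈ Finset.Ico 1 y, F i x y z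
      = ∑ x ∈ Finset.Ico 1 M, ∑ y ∈ Finset.Ico 1 x, ∑ z ∈ Finset.Ico 1 y, ∑ i ∈ I, F i x y z :=
  Finset.sum_comm.trans (Finset.sum_congr rfl fun _ _ =>
    Finset.sum_comm.trans (Finset.sum_congr rfl fun _ _ => Finset.sum_comm))

/-! ### Truncated Euler sums -/

/-- The truncated Euler sum
`∑_{n > k₁ > ⋯ > k_d ≥ 1} e₁^{k₁} ⋯ e_d^{k_d} / (k₁^{s₁} ⋯ k_d^{s_d})` with arguments
`[(s₁, e₁), …, (s_d, e_d)]`. The bound `n` is strict, so that the recursion on the depth needs no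
shift of indices. -/
noncomputable def truncEulerSum : List (ℕ × ℝ) → ℕ → ℝ
  | [], _ => 1
  | (s, e) :: l, n => ∑ k ∈ Finset.Ico 1 n, e ^ k / (k : ℝ) ^ s * truncEulerSum l k

/-- The harmonic number `H_{n-1} = ∑_{1 ≤ i < n} 1 / i`. -/
noncomputable def harm : ℕ → ℝ := truncEulerSum [(1, 1)]

/-- The alternating harmonic number `∑_{1 ≤ i < n} (-1)ⁱ / i`. -/
noncomputable def altHarm : ℕ → ℝ := truncEulerSum [(1, -1)]

/-- The nested sum `∑_{1 ≤ p < q < n} (-1)ᵖ / (q p)`. -/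
noncomputable def altHarmSum : ℕ → ℝ := truncEulerSum [(1, 1), (1, -1)]

lemma truncEulerSum_singleton (s : ℕ) (e : ℝ) (n : ℕ) :
    truncEulerSum [(s, e)] n = ∑ k ∈ Finset.Ico 1 n, e ^ k / (k : ℝ) ^ s := by
  simp [truncEulerSum]

lemma truncEulerSum_pair (s₁ s₂ : ℕ) (e₁ e₂ : ℝ) (n : ℕ) :
    truncEulerSum [(s₁, e₁), (s₂, e₂)] n
      = ∑ n₁ ∈ Finset.Ico 1 n, ∑ n₂ ∈ Finset.Ico 1 n₁,
          e₁ ^ n₁ * e₂ ^ n₂ / ((n₁ : ℝ) ^ s₁ * (n₂ : ℝ) ^ s₂) := by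
  simp only [truncEulerSum, mul_one, Finset.mul_sum, div_mul_div_comm]

lemma truncEulerSum_triple (s₁ s₂ s₃ : ℕ) (e₁ e₂ e₃ : ℝ) (n : ℕ) :
    truncEulerSum [(s₁, e₁), (s₂, e₂), (s₃, e₃)] n
      = ∑ n₁ ∈ Finset.Ico 1 n, ∑ n₂ ∈ Finset.Ico 1 n₁, ∑ n₃ ∈ Finset.Ico 1 n₂,
          e₁ ^ n₁ * e₂ ^ n₂ * e₃ ^ n₃ / ((n₁ : ℝ) ^ s₁ * (n₂ : ℝ) ^ s₂ * (n₃ : ℝ) ^ s₃) := by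
  simp only [truncEulerSum, mul_one, Finset.mul_sum, div_mul_div_comm, mul_assoc]

lemma harm_eq_sum (n : ℕ) : harm n = ∑ i ∈ Finset.Ico 1 n, 1 / (i : ℝ) := by
  simp [harm, truncEulerSum]

lemma altHarm_eq_sum (n : ℕ) : altHarm n = ∑ i ∈ Finset.Ico 1 n, (-1 : ℝ) ^ i / i := by
  simp [altHarm, truncEulerSum]

lemma altHarmSum_eq_sum (n : ℕ) : altHarmSum n = ∑ q ∈ Finset.Ico 1 n, altHarm q / q := by
  simp [altHarmSum, altHarm, truncEulerSum, div_eq_inv_mul]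

lemma harm_one : harm 1 = 0 := by simp [harm_eq_sum]

lemma altHarm_one : altHarm 1 = 0 := by simp [altHarm_eq_sum]

lemma altHarmSum_one : altHarmSum 1 = 0 := by simp [altHarmSum_eq_sum]

lemma harm_succ {n : ℕ} (hn : 1 ≤ n) : harm (n + 1) = harm n + 1 / n := by
  simp [harm_eq_sum, Finset.sum_Ico_succ_top hn]

lemma altHarm_succ {n : ℕ} (hn : 1 ≤ n) : altHarm (n + 1) = altHarm n + (-1 : ℝ) ^ n / n := by
  simp [altHarm_eq_sum, Finset.sum_Ico_succ_top hn]

lemma altHarmSum_succ {n : ℕ} (hn : 1 ≤ n) :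
    altHarmSum (n + 1) = altHarmSum n + altHarm n / n := by
  simp [altHarmSum_eq_sum, Finset.sum_Ico_succ_top hn]

lemma neg_one_pow_mul_self (n : ℕ) : (-1 : ℝ) ^ n * (-1 : ℝ) ^ n = 1 :=
  pow_mul_pow_eq_one n (by norm_num)

lemma harm_nonneg (n : ℕ) : 0 ≤ harm n := by
  rw [harm_eq_sum]
  positivity

lemma harm_mono : Monotone harm := fun m n h => by
  simp only [harm_eq_sum]
  exact Finset.sum_le_sum_of_subset_of_nonneg (Finset.Ico_subset_Ico_right h)
    fun _ _ _ => by positivity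

lemma one_le_harm_succ {n : ℕ} (hn : 1 ≤ n) : 1 ≤ harm (n + 1) := by
  simpa [harm_eq_sum] using harm_mono (show 2 ≤ n + 1 by omega)

lemma harm_succ_eq_harmonic (n : ℕ) : harm (n + 1) = (harmonic n : ℝ) := by
  simp [harm_eq_sum, harmonic_eq_sum_Icc, Finset.Ico_add_one_right_eq_Icc]

lemma harm_succ_isLittleO_rpow (d : ℕ) {p : ℝ} (hp : 0 < p) :
    (fun n : ℕ => harm (n + 1) ^ d) =o[atTop] fun n : ℕ => (n : ℝ) ^ p := by
  have hlog : (fun n : ℕ => harm (n + 1)) =O[atTop] fun n : ℕ => Real.log n := by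
    refine Asymptotics.IsBigO.of_bound 2 ?_
    filter_upwards [eventually_ge_atTop 3] with n hn
    have h1 : 1 ≤ Real.log n := by
      rw [Real.le_log_iff_exp_le (by positivity)]
      exact Real.exp_one_lt_three.le.trans (by exact_mod_cast hn)
    rw [Real.norm_of_nonneg (harm_nonneg _), Real.norm_of_nonneg (by linarith),
      harm_succ_eq_harmonic]
    linarith [harmonic_le_one_add_log n]
  refine (hlog.pow d).trans_isLittleO ?_
  simpa [Function.comp_def] using
    (isLittleO_log_rpow_rpow_atTop (d : ℝ) hp).comp_tendsto tendsto_natCast_atTop_atTop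

lemma tendsto_harm_succ_div_atTop : Tendsto (fun n : ℕ => harm (n + 1) / n) atTop (𝓝 0) := by
  simpa using (harm_succ_isLittleO_rpow 1 one_pos).tendsto_div_nhds_zero

lemma summable_harm_pow_div_sq (d : ℕ) :
    Summable fun n : ℕ => harm (n + 1) ^ d / (n : ℝ) ^ 2 := by
  refine summable_of_isBigO_nat ((Real.summable_nat_rpow (p := -(3 / 2))).2 (by norm_num)) ?_
  have h := (harm_succ_isLittleO_rpow d (p := 1 / 2) (by norm_num)).isBigO.mul
    (Asymptotics.isBigO_refl (fun n : ℕ => ((n : ℝ) ^ 2)⁻¹) atTop)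
  refine h.congr' (Eventually.of_forall fun n => (div_eq_mul_inv _ _).symm) ?_
  filter_upwards [eventually_gt_atTop 0] with n hn
  rw [← Real.rpow_natCast, ← Real.rpow_neg (by positivity), ← Real.rpow_add (by positivity)]
  norm_num

lemma abs_pow_div_pow_le {e : ℝ} (he : |e| ≤ 1) {s : ℕ} (hs : 1 ≤ s) {k : ℕ} (hk : 1 ≤ k) :
    |e ^ k / (k : ℝ) ^ s| ≤ 1 / k := by
  have hk' : (1 : ℝ) ≤ k := by exact_mod_cast hk
  rw [abs_div, abs_pow, abs_of_nonneg (by positivity : (0 : ℝ) ≤ (k : ℝ) ^ s)]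
  exact div_le_div₀ zero_le_one (pow_le_one₀ (abs_nonneg e) he) (by positivity)
    (le_self_pow₀ hk' (by omega))

lemma abs_truncEulerSum_le {l : List (ℕ × ℝ)} (hl : ∀ p ∈ l, 1 ≤ p.1 ∧ |p.2| ≤ 1) (n : ℕ) :
    |truncEulerSum l n| ≤ harm n ^ l.length := by
  induction l generalizing n with
  | nil => simp [truncEulerSum]
  | cons p l ih =>
    obtain ⟨⟨hs, he⟩, hl⟩ := List.forall_mem_cons.1 hl
    calc |truncEulerSum (p :: l) n|
        ≤ ∑ k ∈ Finset.Ico 1 n, |p.2 ^ k / (k : ℝ) ^ p.1 * truncEulerSum l k| :=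
          Finset.abs_sum_le_sum_abs _ _
      _ ≤ ∑ k ∈ Finset.Ico 1 n, 1 / (k : ℝ) * harm n ^ l.length := by
          refine Finset.sum_le_sum fun k hk => ?_
          obtain ⟨hk, hkn⟩ := Finset.mem_Ico.1 hk
          rw [abs_mul]
          exact mul_le_mul (abs_pow_div_pow_le he hs hk)
            ((ih hl k).trans (pow_le_pow_left₀ (harm_nonneg k) (harm_mono hkn.le) _))
            (abs_nonneg _) (by positivity)
      _ = harm n ^ (p :: l).length := by
          rw [← Finset.sum_mul, ← harm_eq_sum, List.length_cons, pow_succ']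

/-! ### Convergence -/

/-- Tannery's theorem for sums over `a ≤ n < M`. -/
lemma tendsto_sum_Ico_of_dominated {E : Type*} [NormedAddCommGroup E] [CompleteSpace E] {a : ℕ}
    {f : ℕ → ℕ → E} {g : ℕ → E} {bound : ℕ → ℝ} (hb : Summable bound)
    (hf : ∀ n, a ≤ n → Tendsto (fun M => f M n) atTop (𝓝 (g n)))
    (hle : ∀ M n, a ≤ n → n < M → ‖f M n‖ ≤ bound n) :
    Tendsto (fun M => ∑ n ∈ Finset.Ico a M, f M n) atTop (𝓝 (∑' n, g (a + n))) := by
  have key := tendsto_tsum_of_dominated_convergence (𝓕 := atTop) (β := ℕ)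
    (f := fun M n => if n ∈ Finset.range (M - a) then f M (a + n) else 0)
    (g := fun n => g (a + n)) (hb.abs.comp_injective (add_right_injective a)) ?_ ?_
  · refine key.congr fun M => ?_
    rw [tsum_eq_sum (s := Finset.range (M - a)) fun n hn => if_neg hn,
      Finset.sum_Ico_eq_sum_range]
    exact Finset.sum_congr rfl fun n hn => if_pos hn
  · intro n
    refine (hf (a + n) (Nat.le_add_right a n)).congr' ?_
    filter_upwards [eventually_gt_atTop (a + n)] with M hM
    rw [if_pos (Finset.mem_range.2 (by omega))]
  · refine Eventually.of_forall fun M n => ?_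
    split_ifs with hn
    · have hn := Finset.mem_range.1 hn
      exact (hle M (a + n) (by omega) (by omega)).trans (le_abs_self _)
    · simp

lemma neg_one_pow_mul_sum_Ico_mem_Icc {f : ℕ → ℝ} {a : ℕ} (hf : AntitoneOn f (Set.Ici a))
    (h0 : ∀ k, a ≤ k → 0 ≤ f k) (d : ℕ) :
    (-1) ^ a * ∑ k ∈ Finset.Ico a (a + d), (-1) ^ k * f k ∈ Set.Icc 0 (f a) := by
  induction d generalizing a with
  | zero => simpa using h0 a le_rfl
  | succ d ih =>
    have ih := ih (a := a + 1) (hf.mono (Set.Ici_subset_Ici.2 a.le_succ)) fun k hk =>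
      h0 k (by omega)
    have hsplit : (-1) ^ a * ∑ k ∈ Finset.Ico a (a + (d + 1)), (-1) ^ k * f k
        = f a - (-1) ^ (a + 1) * ∑ k ∈ Finset.Ico (a + 1) (a + 1 + d), (-1) ^ k * f k := by
      rw [Finset.sum_eq_sum_Ico_succ_bot (by omega), show a + (d + 1) = a + 1 + d by ring]
      linear_combination f a * neg_one_pow_mul_self a
    have hle : f (a + 1) ≤ f a := hf Set.self_mem_Ici (Set.mem_Ici.2 a.le_succ) a.le_succ
    rw [hsplit]
    exact ⟨by linarith [ih.2], by linarith [ih.1]⟩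

lemma abs_sum_Ico_neg_one_pow_mul_le {f : ℕ → ℝ} {a : ℕ} (hf : AntitoneOn f (Set.Ici a))
    (h0 : ∀ k, a ≤ k → 0 ≤ f k) (b : ℕ) :
    |∑ k ∈ Finset.Ico a b, (-1) ^ k * f k| ≤ f a := by
  rcases le_total b a with hba | hab
  · simpa [Finset.Ico_eq_empty_of_le hba] using h0 a le_rfl
  · obtain ⟨d, rfl⟩ := Nat.exists_eq_add_of_le hab
    have h := neg_one_pow_mul_sum_Ico_mem_Icc hf h0 d
    simpa [abs_mul] using (abs_of_nonneg h.1).trans_le h.2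

lemma abs_sum_Ico_neg_one_pow_div_pow_le (s : ℕ) {a : ℕ} (ha : 1 ≤ a) (b : ℕ) :
    |∑ k ∈ Finset.Ico a b, (-1 : ℝ) ^ k / (k : ℝ) ^ s| ≤ 1 / (a : ℝ) ^ s := by
  have hanti : AntitoneOn (fun k : ℕ => 1 / (k : ℝ) ^ s) (Set.Ici a) := fun i hi j _ hij => by
    have hi : (0 : ℝ) < i := by exact_mod_cast ha.trans hi
    dsimp only
    gcongr
  simpa [div_eq_mul_inv] using abs_sum_Ico_neg_one_pow_mul_le hanti (fun _ _ => by positivity) b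

lemma abs_altHarm_le_one (n : ℕ) : |altHarm n| ≤ 1 := by
  simpa [altHarm_eq_sum] using abs_sum_Ico_neg_one_pow_div_pow_le 1 le_rfl n

lemma exists_tendsto_truncEulerSum_singleton_neg_one {s : ℕ} (hs : 1 ≤ s) :
    ∃ t, Tendsto (truncEulerSum [(s, -1)]) atTop (𝓝 t) := by
  have hanti : Antitone fun i : ℕ => 1 / ((i + 1 : ℕ) : ℝ) ^ s := fun i j hij => by
    dsimp only
    gcongr
  obtain ⟨t, ht⟩ := hanti.tendsto_alternating_series_of_tendsto_zero
    ((tendsto_const_div_pow (1 : ℝ) s (by omega)).comp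
      (tendsto_natCast_atTop_atTop.comp (tendsto_add_atTop_nat 1)))
  refine ⟨-t, (tendsto_add_atTop_iff_nat 1).1 (ht.neg.congr fun n => ?_)⟩
  rw [truncEulerSum_singleton, Finset.sum_Ico_eq_sum_range, ← Finset.sum_neg_distrib]
  refine Finset.sum_congr (by simp) fun i _ => ?_
  rw [add_comm 1 i, pow_succ]
  ring

/-- Summing first over the alternating index makes the remaining sums absolutely convergent. -/
theorem exists_tendsto_truncEulerSum_neg_one {s : ℕ} (hs : 1 ≤ s) {l : List (ℕ × ℝ)}
    (hl : ∀ p ∈ l, 1 ≤ p.1 ∧ |p.2| ≤ 1) :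
    ∃ t, Tendsto (truncEulerSum ((s, -1) :: l)) atTop (𝓝 t) := by
  rcases l with _ | ⟨p, l⟩
  · exact exists_tendsto_truncEulerSum_singleton_neg_one hs
  obtain ⟨t, ht⟩ := exists_tendsto_truncEulerSum_singleton_neg_one hs
  have hterm (j : ℕ) (hj : 1 ≤ j) :
      |p.2 ^ j / (j : ℝ) ^ p.1 * truncEulerSum l j| ≤ harm (j + 1) ^ l.length / j := by
    obtain ⟨⟨hp, he⟩, hl⟩ := List.forall_mem_cons.1 hl
    rw [abs_mul, mul_comm, ← mul_one_div (harm _ ^ _)]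
    exact mul_le_mul ((abs_truncEulerSum_le hl j).trans
      (pow_le_pow_left₀ (harm_nonneg j) (harm_mono j.le_succ) _))
      (abs_pow_div_pow_le he hp hj) (abs_nonneg _) (pow_nonneg (harm_nonneg _) _)
  have htail (j : ℕ) : Tendsto (fun M => ∑ k ∈ Finset.Ico (j + 1) M, (-1 : ℝ) ^ k / (k : ℝ) ^ s)
      atTop (𝓝 (t - truncEulerSum [(s, -1)] (j + 1))) := by
    refine (ht.sub_const _).congr' ?_
    filter_upwards [eventually_ge_atTop (j + 1)] with M hM
    rw [sum_Ico_eq_sub_of_le _ j.succ_pos hM, truncEulerSum_singleton, truncEulerSum_singleton]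
  refine ⟨_, (tendsto_sum_Ico_of_dominated (a := 1) (summable_harm_pow_div_sq l.length)
    (fun j _ => (htail j).const_mul (p.2 ^ j / (j : ℝ) ^ p.1 * truncEulerSum l j))
    fun M j hj _ => ?_).congr fun M => ?_⟩
  · have htail_le : |∑ k ∈ Finset.Ico (j + 1) M, (-1 : ℝ) ^ k / (k : ℝ) ^ s| ≤ 1 / j :=
      (abs_sum_Ico_neg_one_pow_div_pow_le s (by omega) M).trans
        (one_div_le_one_div_of_le (by exact_mod_cast hj)
          (by exact_mod_cast j.le_succ.trans (Nat.le_self_pow (by omega) _)))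
    calc _ = |p.2 ^ j / (j : ℝ) ^ p.1 * truncEulerSum l j|
          * |∑ k ∈ Finset.Ico (j + 1) M, (-1 : ℝ) ^ k / (k : ℝ) ^ s| := abs_mul _ _
      _ ≤ harm (j + 1) ^ l.length / j * (1 / j) :=
          mul_le_mul (hterm j hj) htail_le (abs_nonneg _)
            (div_nonneg (pow_nonneg (harm_nonneg _) _) j.cast_nonneg)
      _ = _ := by rw [div_mul_div_comm, mul_one, pow_two]
  · simp only [truncEulerSum, sum_Ico_mul_sum_Ico]

lemma tendsto_limUnder_succ {X : Type*} [TopologicalSpace X] [Nonempty X] {f : ℕ → X}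
    (hf : ∃ t, Tendsto f atTop (𝓝 t)) :
    Tendsto f atTop (𝓝 (limUnder atTop fun N => f (N + 1))) :=
  (tendsto_add_atTop_iff_nat 1).1
    (tendsto_nhds_limUnder (hf.imp fun _ h => h.comp (tendsto_add_atTop_nat 1)))

lemma tendsto_eulerSum1 {s : ℕ} (hs : 1 ≤ s) :
    Tendsto (truncEulerSum [(s, -1)]) atTop (𝓝 (eulerSum1 s (-1))) := by
  simpa only [truncEulerSum_singleton, Finset.Ico_add_one_right_eq_Icc, eulerSum1] using
    tendsto_limUnder_succ (exists_tendsto_truncEulerSum_singleton_neg_one hs)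

lemma tendsto_eulerSum2 {s₁ s₂ : ℕ} {e₂ : ℝ} (h₁ : 1 ≤ s₁) (h₂ : 1 ≤ s₂) (he₂ : |e₂| ≤ 1) :
    Tendsto (truncEulerSum [(s₁, -1), (s₂, e₂)]) atTop (𝓝 (eulerSum2 s₁ s₂ (-1) e₂)) := by
  simpa only [truncEulerSum_pair, Finset.Ico_add_one_right_eq_Icc, eulerSum2] using
    tendsto_limUnder_succ
      (exists_tendsto_truncEulerSum_neg_one h₁ (l := [(s₂, e₂)]) (by simp [h₂, he₂]))

lemma tendsto_eulerSum3 {s₁ s₂ s₃ : ℕ} {e₂ e₃ : ℝ} (h₁ : 1 ≤ s₁) (h₂ : 1 ≤ s₂) (h₃ : 1 ≤ s₃)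
    (he₂ : |e₂| ≤ 1) (he₃ : |e₃| ≤ 1) :
    Tendsto (truncEulerSum [(s₁, -1), (s₂, e₂), (s₃, e₃)]) atTop
      (𝓝 (eulerSum3 s₁ s₂ s₃ (-1) e₂ e₃)) := by
  simpa only [truncEulerSum_triple, Finset.Ico_add_one_right_eq_Icc, eulerSum3] using
    tendsto_limUnder_succ (exists_tendsto_truncEulerSum_neg_one h₁ (l := [(s₂, e₂), (s₃, e₃)])
      (by simp [h₂, h₃, he₂, he₃]))

lemma tendsto_altHarm : Tendsto altHarm atTop (𝓝 (eulerSum1 1 (-1))) := tendsto_eulerSum1 le_rfl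

lemma tendsto_sum_altHarm_div :
    Tendsto (fun K : ℕ => ∑ k ∈ Finset.Ico 1 K, (-1 : ℝ) ^ k * altHarm k / k) atTop
      (𝓝 (eulerSum2 1 1 (-1) (-1))) := by
  refine (tendsto_eulerSum2 le_rfl le_rfl (by simp)).congr fun K => ?_
  simp only [truncEulerSum, altHarm, pow_one, div_mul_eq_mul_div]

/-! ### Shifted denominators -/

lemma sum_one_div_sub_one_div_add (n : ℕ) {K : ℕ} (hK : 1 ≤ K) :
    ∑ k ∈ Finset.Ico 1 K, (1 / (k : ℝ) - 1 / (k + n))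
      = harm (n + 1) - (harm (K + n) - harm K) := by
  have h := sum_Ico_add_eq_sub (fun k => 1 / (k : ℝ)) n hK
  push_cast at h
  rw [Finset.sum_sub_distrib, h, ← harm_eq_sum, ← harm_eq_sum, ← harm_eq_sum]
  ring

lemma sum_one_div_sub_one_div_add_le (n K : ℕ) :
    ∑ k ∈ Finset.Ico 1 K, (1 / (k : ℝ) - 1 / (k + n)) ≤ harm (n + 1) := by
  rcases Nat.eq_zero_or_pos K with rfl | hK
  · simpa using harm_nonneg (n + 1)
  · rw [sum_one_div_sub_one_div_add n hK]
    linarith [harm_mono (Nat.le_add_right K n)]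

lemma tendsto_harm_add_sub_harm (n : ℕ) :
    Tendsto (fun K => harm (K + n) - harm K) atTop (𝓝 0) := by
  induction n with
  | zero => simp
  | succ n ih =>
    have h := ih.add ((tendsto_one_div_atTop_nhds_zero_nat (𝕜 := ℝ)).comp (tendsto_add_atTop_nat n))
    rw [add_zero] at h
    refine h.congr' ?_
    filter_upwards [eventually_ge_atTop 1] with K hK
    rw [← add_assoc, harm_succ (by omega : 1 ≤ K + n), Function.comp_apply]
    ring

lemma tendsto_sum_one_div_sub_one_div_add (n : ℕ) :
    Tendsto (fun K : ℕ => ∑ k ∈ Finset.Ico 1 K, (1 / (k : ℝ) - 1 / (k + n))) atTop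
      (𝓝 (harm (n + 1))) := by
  have h := (tendsto_harm_add_sub_harm n).const_sub (harm (n + 1))
  rw [sub_zero] at h
  refine h.congr' ?_
  filter_upwards [eventually_ge_atTop 1] with K hK
  exact (sum_one_div_sub_one_div_add n hK).symm

lemma sum_one_div_mul_add {n : ℕ} (hn : 1 ≤ n) (K : ℕ) :
    ∑ k ∈ Finset.Ico 1 K, 1 / ((k : ℝ) * (k + n))
      = (∑ k ∈ Finset.Ico 1 K, (1 / (k : ℝ) - 1 / (k + n))) / n := by
  rw [Finset.sum_div]
  refine Finset.sum_congr rfl fun k hk => ?_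
  have hk' : (k : ℝ) ≠ 0 := by exact_mod_cast (Nat.one_le_iff_ne_zero.1 (Finset.mem_Ico.1 hk).1)
  field_simp
  ring

lemma tendsto_sum_neg_one_pow_div_add (n : ℕ) :
    Tendsto (fun K : ℕ => ∑ k ∈ Finset.Ico 1 K, (-1 : ℝ) ^ k / ((k : ℝ) + n)) atTop
      (𝓝 ((-1 : ℝ) ^ n * (eulerSum1 1 (-1) - altHarm (n + 1)))) := by
  refine (((tendsto_altHarm.comp (tendsto_add_atTop_nat n)).sub_const _).const_mul _).congr' ?_
  filter_upwards [eventually_ge_atTop 1] with K hK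
  rw [Function.comp_apply, altHarm_eq_sum, altHarm_eq_sum, ← sum_Ico_add_eq_sub _ n hK,
    Finset.mul_sum]
  refine Finset.sum_congr rfl fun k _ => ?_
  push_cast
  rw [pow_add]
  linear_combination (-1 : ℝ) ^ k / (k + n : ℝ) * neg_one_pow_mul_self n

lemma sum_altHarm_div_shift (n : ℕ) {K : ℕ} (hK : 1 ≤ K) :
    ∑ k ∈ Finset.Ico 1 (K + 1), (-1 : ℝ) ^ k * altHarm k / (k + n)
      = -∑ k ∈ Finset.Ico 1 K, (-1 : ℝ) ^ k * altHarm k / (k + (n + 1 : ℕ))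
        - ∑ k ∈ Finset.Ico 1 K, 1 / ((k : ℝ) * (k + (n + 1 : ℕ))) := by
  induction K, hK using Nat.le_induction with
  | base => simp [altHarm_one]
  | succ K hK ih =>
    rw [Finset.sum_Ico_succ_top (by omega), ih, Finset.sum_Ico_succ_top hK,
      Finset.sum_Ico_succ_top hK, altHarm_succ hK, pow_succ]
    have h1 : (K : ℝ) ≠ 0 := by positivity
    have h2 : (K : ℝ) + (n + 1) ≠ 0 := by positivity
    push_cast
    rw [show (K : ℝ) + 1 + n = K + (n + 1) by ring]
    field_simp
    linear_combination -neg_one_pow_mul_self K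

lemma tendsto_sum_altHarm_div_add (n : ℕ) :
    Tendsto (fun K : ℕ => ∑ k ∈ Finset.Ico 1 K, (-1 : ℝ) ^ k * altHarm k / (k + n)) atTop
      (𝓝 ((-1 : ℝ) ^ n *
        (eulerSum2 1 1 (-1) (-1) - (harm (n + 1) * altHarm (n + 1) - altHarmSum (n + 1))))) := by
  induction n with
  | zero => simpa [harm_one, altHarmSum_one] using tendsto_sum_altHarm_div
  | succ n ih =>
    have h := (ih.comp (tendsto_add_atTop_nat 1)).neg.sub
      ((tendsto_sum_one_div_sub_one_div_add (n + 1)).div_const ((n + 1 : ℕ) : ℝ))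
    convert h.congr' ?_ using 2
    · rw [altHarm_succ (n := n + 1) (by omega), altHarmSum_succ (n := n + 1) (by omega),
        harm_succ (n := n + 1) (by omega), pow_succ]
      linear_combination (-(harm (n + 1) + 1 / ((n + 1 : ℕ) : ℝ)) / ((n + 1 : ℕ) : ℝ))
        * neg_one_pow_mul_self n
    · filter_upwards [eventually_ge_atTop 1] with K hK
      rw [Function.comp_apply, sum_altHarm_div_shift n hK, sum_one_div_mul_add (by omega) K]
      ring

lemma abs_sum_altHarm_div_add_le (n K : ℕ) :
    |∑ k ∈ Finset.Ico 1 K, (-1 : ℝ) ^ k * altHarm k / (k + n)|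
      ≤ harm (n + 2) / ((n + 1 : ℕ) : ℝ) := by
  have hinner (j : ℕ) : |∑ k ∈ Finset.Ico (j + 1) K, (-1 : ℝ) ^ k * (1 / ((k : ℝ) + n))|
      ≤ 1 / ((j : ℝ) + (n + 1 : ℕ)) := by
    have hanti : AntitoneOn (fun k : ℕ => 1 / ((k : ℝ) + n)) (Set.Ici (j + 1)) := by
      intro i hi k _ hik
      have hi : (0 : ℝ) < i := by exact_mod_cast j.succ_pos.trans_le hi
      dsimp only
      gcongr
    refine (abs_sum_Ico_neg_one_pow_mul_le hanti (fun _ _ => by positivity) K).trans_eq ?_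
    push_cast
    ring
  calc |∑ k ∈ Finset.Ico 1 K, (-1 : ℝ) ^ k * altHarm k / (k + n)|
      = |∑ j ∈ Finset.Ico 1 K, (-1 : ℝ) ^ j / j *
          ∑ k ∈ Finset.Ico (j + 1) K, (-1 : ℝ) ^ k * (1 / ((k : ℝ) + n))| := by
        rw [← sum_Ico_mul_sum_Ico]
        simp only [← altHarm_eq_sum, mul_one_div, div_mul_eq_mul_div]
    _ ≤ ∑ j ∈ Finset.Ico 1 K, 1 / ((j : ℝ) * (j + (n + 1 : ℕ))) := by
        refine (Finset.abs_sum_le_sum_abs _ _).trans (Finset.sum_le_sum fun j _ => ?_)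
        rw [abs_mul, abs_div, abs_pow, abs_neg, abs_one, one_pow, Nat.abs_cast,
          ← one_div_mul_one_div]
        gcongr
        exact hinner j
    _ ≤ harm (n + 2) / ((n + 1 : ℕ) : ℝ) := by
        rw [sum_one_div_mul_add (by omega)]
        gcongr
        exact sum_one_div_sub_one_div_add_le (n + 1) K

/-- Up to sign, `c - (harm n * altHarm n - altHarmSum n)` with `c = eulerSum2 1 1 (-1) (-1)` is
the sum of the series in `tendsto_sum_altHarm_div_add`, which vanishes as `n → ∞`. -/
lemma tendsto_harm_mul_altHarm_sub_altHarmSum :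
    Tendsto (fun n => harm n * altHarm n - altHarmSum n) atTop
      (𝓝 (eulerSum2 1 1 (-1) (-1))) := by
  refine (tendsto_add_atTop_iff_nat 1).1 (tendsto_iff_norm_sub_tendsto_zero.2
    (squeeze_zero (fun _ => norm_nonneg _) (fun n => ?_)
      (tendsto_harm_succ_div_atTop.comp (tendsto_add_atTop_nat 1))))
  have h := le_of_tendsto (tendsto_sum_altHarm_div_add n).abs
    (Eventually.of_forall (abs_sum_altHarm_div_add_le n))
  rwa [abs_mul, abs_neg_one_pow, one_mul, abs_sub_comm] at h

/-! ### The two kernels -/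

/-- The coefficient of `1 / n ^ (w - 2)` in the sum, over all `a + b + c = w` with `a ≥ 2`, of the
truncations of `ζ(ā, b̄, c)` to indices `< M`. -/
noncomputable def tripleKernel (M n : ℕ) : ℝ :=
  ∑ k ∈ Finset.Ico 1 (M - n), (1 / (k : ℝ) - 1 / (k + n)) * (-1 : ℝ) ^ k * (altHarm k - harm n)
    + altHarmSum n

/-- The common limit of `tripleKernel M n` and `tailKernel M n` as `M → ∞`. -/
noncomputable def limitKernel (n : ℕ) : ℝ :=
  (1 - (-1 : ℝ) ^ n) *
    (eulerSum2 1 1 (-1) (-1) - eulerSum1 1 (-1) * harm n + altHarmSum n) + 1 / (n : ℝ) ^ 2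

lemma tendsto_tripleKernel {n : ℕ} (hn : 1 ≤ n) :
    Tendsto (fun M => tripleKernel M n) atTop (𝓝 (limitKernel n)) := by
  have h := ((tendsto_sum_altHarm_div.sub (tendsto_sum_altHarm_div_add n)).sub
    ((tendsto_altHarm.sub (tendsto_sum_neg_one_pow_div_add n)).const_mul (harm n))).add_const
      (altHarmSum n)
  convert (h.comp (tendsto_sub_atTop_nat n)).congr fun M => ?_ using 2
  · rw [limitKernel, altHarm_succ hn, altHarmSum_succ hn, harm_succ hn]
    linear_combination -(1 / (n : ℝ) ^ 2) * neg_one_pow_mul_self n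
  · rw [Function.comp_apply, tripleKernel, altHarm_eq_sum (M - n), ← Finset.sum_sub_distrib,
      ← Finset.sum_sub_distrib, Finset.mul_sum, ← Finset.sum_sub_distrib]
    exact congrArg (· + altHarmSum n) (Finset.sum_congr rfl fun k _ => by ring)

lemma abs_altHarm_sub_harm_le (k n : ℕ) : |altHarm k - harm n| ≤ 1 + harm n :=
  (abs_sub _ _).trans
    (add_le_add (abs_altHarm_le_one k) (abs_of_nonneg (harm_nonneg n)).le)

lemma abs_tripleKernel_le (M : ℕ) {n : ℕ} (hn : 1 ≤ n) :
    |tripleKernel M n| ≤ 3 * harm (n + 1) ^ 2 := by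
  have hsum : |∑ k ∈ Finset.Ico 1 (M - n),
      (1 / (k : ℝ) - 1 / (k + n)) * (-1 : ℝ) ^ k * (altHarm k - harm n)|
      ≤ harm (n + 1) * (1 + harm n) := by
    refine (Finset.abs_sum_le_sum_abs _ _).trans (le_trans ?_ (mul_le_mul_of_nonneg_right
      (sum_one_div_sub_one_div_add_le n (M - n)) (add_nonneg zero_le_one (harm_nonneg n))))
    rw [Finset.sum_mul]
    refine Finset.sum_le_sum fun k hk => ?_
    have hk : (0 : ℝ) < k := by exact_mod_cast (Finset.mem_Ico.1 hk).1
    have hdiff : 0 ≤ 1 / (k : ℝ) - 1 / (k + n) :=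
      sub_nonneg.2 (one_div_le_one_div_of_le hk (by linarith [n.cast_nonneg (α := ℝ)]))
    rw [abs_mul, abs_mul, abs_neg_one_pow, mul_one, abs_of_nonneg hdiff]
    exact mul_le_mul_of_nonneg_left (abs_altHarm_sub_harm_le k n) hdiff
  have haltSum : |altHarmSum n| ≤ harm n ^ 2 :=
    abs_truncEulerSum_le (l := [(1, 1), (1, -1)]) (by simp) n
  have hone := one_le_harm_succ hn
  have hmono : harm n ≤ harm (n + 1) := harm_mono n.le_succ
  have hnonneg := harm_nonneg n
  calc |tripleKernel M n| ≤ harm (n + 1) * (1 + harm n) + harm n ^ 2 :=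
        (abs_add_le _ _).trans (add_le_add hsum haltSum)
    _ ≤ 3 * harm (n + 1) ^ 2 := by nlinarith

/-- The double sum `∑_{n ≤ l ≤ k < M} (-1)ᵏ / (l k)`. -/
noncomputable def altDoubleTail (M n : ℕ) : ℝ :=
  ∑ l ∈ Finset.Ico n M, 1 / (l : ℝ) * ∑ k ∈ Finset.Ico l M, (-1 : ℝ) ^ k / k

lemma altDoubleTail_eq {M n : ℕ} (hn : 1 ≤ n) (hM : n ≤ M) :
    altDoubleTail M n
      = (harm M * altHarm M - altHarmSum M) - altHarm M * harm n + altHarmSum n := by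
  have hterm : ∀ l ∈ Finset.Ico n M, 1 / (l : ℝ) * ∑ k ∈ Finset.Ico l M, (-1 : ℝ) ^ k / k
      = altHarm M * (1 / l) - altHarm l / l := by
    intro l hl
    obtain ⟨hnl, hlM⟩ := Finset.mem_Ico.1 hl
    rw [sum_Ico_eq_sub_of_le _ (hn.trans hnl) hlM.le, ← altHarm_eq_sum, ← altHarm_eq_sum]
    ring
  rw [altDoubleTail, Finset.sum_congr rfl hterm, Finset.sum_sub_distrib, ← Finset.mul_sum,
    sum_Ico_eq_sub_of_le _ hn hM, sum_Ico_eq_sub_of_le _ hn hM, ← harm_eq_sum,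
    ← harm_eq_sum, ← altHarmSum_eq_sum, ← altHarmSum_eq_sum]
  ring

lemma tendsto_altDoubleTail {n : ℕ} (hn : 1 ≤ n) :
    Tendsto (fun M => altDoubleTail M n) atTop
      (𝓝 (eulerSum2 1 1 (-1) (-1) - eulerSum1 1 (-1) * harm n + altHarmSum n)) := by
  refine ((tendsto_harm_mul_altHarm_sub_altHarmSum.sub
    (tendsto_altHarm.mul_const (harm n))).add_const (altHarmSum n)).congr' ?_
  filter_upwards [eventually_ge_atTop n] with M hM
  exact (altDoubleTail_eq hn hM).symm

lemma abs_altDoubleTail_le (M : ℕ) {n : ℕ} (hn : 1 ≤ n) : |altDoubleTail M n| ≤ 2 := by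
  calc |altDoubleTail M n| ≤ ∑ l ∈ Finset.Ico n M, ((l : ℝ) ^ 2)⁻¹ := by
        refine (Finset.abs_sum_le_sum_abs _ _).trans (Finset.sum_le_sum fun l hl => ?_)
        have htail := abs_sum_Ico_neg_one_pow_div_pow_le 1 (hn.trans (Finset.mem_Ico.1 hl).1) M
        simp only [pow_one] at htail
        rw [abs_mul, abs_of_nonneg (by positivity : (0 : ℝ) ≤ 1 / l), pow_two, mul_inv, ← one_div]
        gcongr
    _ ≤ ∑ l ∈ Finset.Ioo 0 M, ((l : ℝ) ^ 2)⁻¹ :=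
        Finset.sum_le_sum_of_subset_of_nonneg (fun l hl => Finset.mem_Ioo.2
          ⟨hn.trans (Finset.mem_Ico.1 hl).1, (Finset.mem_Ico.1 hl).2⟩) fun _ _ _ => by positivity
    _ ≤ 2 := by simpa using sum_Ioo_inv_sq_le (α := ℝ) 0 M

/-- The coefficient of `1 / n ^ (w - 2)` in the right-hand side of the sum formula, truncated to
indices `< M`. -/
noncomputable def tailKernel (M n : ℕ) : ℝ :=
  (1 - (-1 : ℝ) ^ n) * altDoubleTail M n + 1 / (n : ℝ) ^ 2

lemma tendsto_tailKernel {n : ℕ} (hn : 1 ≤ n) :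
    Tendsto (fun M => tailKernel M n) atTop (𝓝 (limitKernel n)) :=
  ((tendsto_altDoubleTail hn).const_mul _).add_const _

lemma abs_tailKernel_le (M : ℕ) {n : ℕ} (hn : 1 ≤ n) : |tailKernel M n| ≤ 5 := by
  have hsign : |1 - (-1 : ℝ) ^ n| ≤ 2 := by
    refine (abs_sub _ _).trans ?_
    rw [abs_one, abs_neg_one_pow]
    norm_num
  have hinv : |1 / (n : ℝ) ^ 2| ≤ 1 := by
    have hn' : (1 : ℝ) ≤ n := by exact_mod_cast hn
    rw [abs_of_nonneg (by positivity)]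
    exact div_le_one_of_le₀ (one_le_pow₀ hn') (by positivity)
  calc |tailKernel M n| ≤ 2 * 2 + 1 := by
        refine (abs_add_le _ _).trans (add_le_add ?_ hinv)
        rw [abs_mul]
        exact mul_le_mul hsign (abs_altDoubleTail_le M hn) (abs_nonneg _) zero_le_two
    _ = 5 := by norm_num

lemma tendsto_sum_tripleKernel_sub_tailKernel {u : ℕ} (hu : 2 ≤ u) :
    Tendsto (fun M : ℕ => ∑ n ∈ Finset.Ico 1 M,
      1 / (n : ℝ) ^ u * (tripleKernel M n - tailKernel M n)) atTop (𝓝 0) := by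
  have h := tendsto_sum_Ico_of_dominated (a := 1) ((summable_harm_pow_div_sq 2).mul_left 8)
    (f := fun M n => 1 / (n : ℝ) ^ u * (tripleKernel M n - tailKernel M n)) (g := fun _ => 0)
    (fun n hn => by
      simpa using ((tendsto_tripleKernel hn).sub (tendsto_tailKernel hn)).const_mul
        (1 / (n : ℝ) ^ u)) ?_
  · simpa using h
  · intro M n hn _
    have hn' : (1 : ℝ) ≤ n := by exact_mod_cast hn
    have hdiff : |tripleKernel M n - tailKernel M n| ≤ 8 * harm (n + 1) ^ 2 := by
      have hone := one_le_pow₀ (one_le_harm_succ hn) (n := 2)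
      linarith [abs_sub (tripleKernel M n) (tailKernel M n), abs_tripleKernel_le M hn,
        abs_tailKernel_le M hn]
    have hpow : (n : ℝ) ^ 2 ≤ (n : ℝ) ^ u := pow_le_pow_right₀ hn' hu
    rw [Real.norm_eq_abs, abs_mul, abs_of_nonneg (by positivity : (0 : ℝ) ≤ 1 / (n : ℝ) ^ u),
      one_div_mul_eq_div, ← mul_div_assoc]
    gcongr

lemma altDoubleTail_eq_add {M n : ℕ} (h : n < M) :
    altDoubleTail M n
      = ∑ l ∈ Finset.Ico (n + 1) M, 1 / (l : ℝ) * ∑ k ∈ Finset.Ico (l + 1) M, (-1 : ℝ) ^ k / k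
        + 1 / n * ∑ k ∈ Finset.Ico (n + 1) M, (-1 : ℝ) ^ k / k
        + ∑ l ∈ Finset.Ico (n + 1) M, (-1 : ℝ) ^ l / (l : ℝ) ^ 2 + (-1 : ℝ) ^ n / (n : ℝ) ^ 2 := by
  have hterm : ∀ l ∈ Finset.Ico (n + 1) M, 1 / (l : ℝ) * ∑ k ∈ Finset.Ico l M, (-1 : ℝ) ^ k / k
      = 1 / (l : ℝ) * ∑ k ∈ Finset.Ico (l + 1) M, (-1 : ℝ) ^ k / k
        + (-1 : ℝ) ^ l / (l : ℝ) ^ 2 := by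
    intro l hl
    rw [Finset.sum_eq_sum_Ico_succ_bot (Finset.mem_Ico.1 hl).2]
    ring
  rw [altDoubleTail, Finset.sum_eq_sum_Ico_succ_bot h, Finset.sum_eq_sum_Ico_succ_bot h,
    Finset.sum_congr rfl hterm, Finset.sum_add_distrib]
  ring

lemma truncEulerSum_add_add_eq_sum_altDoubleTail (u : ℕ) (e : ℝ) (M : ℕ) :
    truncEulerSum [(1, -1), (1, 1), (u, e)] M + truncEulerSum [(1, -1), (u + 1, e)] M
        + truncEulerSum [(2, -1), (u, e)] M
      = ∑ n ∈ Finset.Ico 1 M,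
          e ^ n / (n : ℝ) ^ u * (altDoubleTail M n - (-1 : ℝ) ^ n / (n : ℝ) ^ 2) := by
  have htriple : truncEulerSum [(1, -1), (1, 1), (u, e)] M
      = ∑ n ∈ Finset.Ico 1 M, e ^ n / (n : ℝ) ^ u *
          ∑ l ∈ Finset.Ico (n + 1) M, 1 / (l : ℝ) *
            ∑ k ∈ Finset.Ico (l + 1) M, (-1 : ℝ) ^ k / k := by
    rw [← sum_Ico_mul_sum_Ico]
    simp only [truncEulerSum, mul_one, pow_one, one_pow]
    rw [sum_Ico_mul_sum_Ico]
    exact Finset.sum_congr rfl fun l _ => mul_right_comm _ _ _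
  rw [htriple, truncEulerSum, truncEulerSum]
  simp only [truncEulerSum_singleton, sum_Ico_mul_sum_Ico, pow_one]
  rw [← Finset.sum_add_distrib, ← Finset.sum_add_distrib]
  refine Finset.sum_congr rfl fun n hn => ?_
  rw [altDoubleTail_eq_add (Finset.mem_Ico.1 hn).2]
  ring

lemma truncEulerSum_eq_sum_tailKernel (u M : ℕ) :
    truncEulerSum [(1, -1), (1, 1), (u, 1)] M - truncEulerSum [(1, -1), (1, 1), (u, -1)] M
        + truncEulerSum [(1, -1), (u + 1, 1)] M - truncEulerSum [(1, -1), (u + 1, -1)] M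
        + truncEulerSum [(2, -1), (u, 1)] M - truncEulerSum [(2, -1), (u, -1)] M
        + truncEulerSum [(u + 2, -1)] M
      = ∑ n ∈ Finset.Ico 1 M, 1 / (n : ℝ) ^ u * tailKernel M n := by
  have h : ∑ n ∈ Finset.Ico 1 M, 1 / (n : ℝ) ^ u * tailKernel M n
      = ∑ n ∈ Finset.Ico 1 M,
          1 ^ n / (n : ℝ) ^ u * (altDoubleTail M n - (-1 : ℝ) ^ n / (n : ℝ) ^ 2)
        - ∑ n ∈ Finset.Ico 1 M,
          (-1) ^ n / (n : ℝ) ^ u * (altDoubleTail M n - (-1 : ℝ) ^ n / (n : ℝ) ^ 2)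
        + truncEulerSum [(u + 2, -1)] M := by
    rw [truncEulerSum_singleton, ← Finset.sum_sub_distrib, ← Finset.sum_add_distrib]
    refine Finset.sum_congr rfl fun n _ => ?_
    rw [tailKernel, one_pow]
    linear_combination -(1 / (n : ℝ) ^ (u + 2)) * neg_one_pow_mul_self n
  rw [h, ← truncEulerSum_add_add_eq_sum_altDoubleTail, ← truncEulerSum_add_add_eq_sum_altDoubleTail]
  ring

/-! ### Partial fractions -/

lemma sum_one_div_pow_mul_pow {F : Type*} [Field F] {y z : F} (hy : y ≠ 0) (hz : z ≠ 0)
    (hyz : y - z ≠ 0) (t : ℕ) :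
    ∑ b ∈ Finset.Icc 1 t, 1 / (y ^ b * z ^ (t + 1 - b)) = (1 / z ^ t - 1 / y ^ t) / (y - z) := by
  induction t with
  | zero => simp
  | succ t ih =>
    have hsucc : ∑ b ∈ Finset.Icc 1 t, 1 / (y ^ b * z ^ (t + 1 + 1 - b))
        = (∑ b ∈ Finset.Icc 1 t, 1 / (y ^ b * z ^ (t + 1 - b))) / z := by
      rw [Finset.sum_div]
      refine Finset.sum_congr rfl fun b hb => ?_
      rw [Nat.succ_sub (Nat.le_succ_of_le (Finset.mem_Icc.1 hb).2), pow_succ, div_div, mul_assoc]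
    rw [Finset.sum_Icc_succ_top (by omega), hsucc, ih, Nat.add_sub_cancel_left]
    field_simp
    ring

lemma sum_triple_partial_fractions {F : Type*} [Field F] {x y z : F} (hx : x ≠ 0) (hy : y ≠ 0)
    (hz : z ≠ 0) (hxy : x - y ≠ 0) (hxz : x - z ≠ 0) (hyz : y - z ≠ 0) (m : ℕ) :
    ∑ a ∈ Finset.Icc 2 (m + 1), ∑ b ∈ Finset.Icc 1 (m + 3 - a - 1),
        1 / (x ^ a * y ^ b * z ^ (m + 3 - a - b))
      = 1 / z ^ m / (x * (x - z) * (y - z)) - 1 / y ^ m / (x * (x - y) * (y - z))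
        + 1 / x ^ m / (x * (x - y) * (x - z)) := by
  have hinner : ∀ a ∈ Finset.Icc 1 m, ∑ b ∈ Finset.Icc 1 (m + 3 - (a + 1) - 1),
        1 / (x ^ (a + 1) * y ^ b * z ^ (m + 3 - (a + 1) - b))
      = (1 / (x ^ a * z ^ (m + 1 - a)) - 1 / (x ^ a * y ^ (m + 1 - a))) / (x * (y - z)) := by
    intro a ha
    have ha := (Finset.mem_Icc.1 ha).2
    rw [show m + 3 - (a + 1) - 1 = m + 1 - a by omega,
      show m + 3 - (a + 1) = m + 1 - a + 1 by omega]
    calc _ = 1 / x ^ (a + 1) *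
          ∑ b ∈ Finset.Icc 1 (m + 1 - a), 1 / (y ^ b * z ^ (m + 1 - a + 1 - b)) := by
          rw [Finset.mul_sum]
          refine Finset.sum_congr rfl fun b _ => ?_
          rw [one_div_mul_one_div, mul_assoc]
      _ = _ := by
          rw [sum_one_div_pow_mul_pow hy hz hyz]
          field_simp
          ring
  have hshift (f : ℕ → F) :
      ∑ a ∈ Finset.Icc 2 (m + 1), f a = ∑ a ∈ Finset.Icc 1 m, f (a + 1) := by
    rw [← Finset.Ico_add_one_right_eq_Icc, ← Finset.Ico_add_one_right_eq_Icc,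
      Finset.sum_Ico_add' f 1 (m + 1) 1]
  rw [hshift, Finset.sum_congr rfl hinner, ← Finset.sum_div, Finset.sum_sub_distrib,
    sum_one_div_pow_mul_pow hx hz hxz, sum_one_div_pow_mul_pow hx hy hxy]
  field_simp
  ring

lemma natCast_ne_zero_of_mem_Ico_one {M k : ℕ} (hk : k ∈ Finset.Ico 1 M) : (k : ℝ) ≠ 0 :=
  Nat.cast_ne_zero.2 (Nat.one_le_iff_ne_zero.1 (Finset.mem_Ico.1 hk).1)

lemma sum_smallest_pole (f : ℕ → ℝ) (M : ℕ) :
    ∑ x ∈ Finset.Ico 1 M, ∑ y ∈ Finset.Ico 1 x, ∑ z ∈ Finset.Ico 1 y,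
      (-1 : ℝ) ^ x * (-1) ^ y * (f z / (x * (x - z) * (y - z)))
    = ∑ n ∈ Finset.Ico 1 M, f n / n *
        ∑ k ∈ Finset.Ico 1 (M - n), (1 / (k : ℝ) - 1 / (k + n)) * (-1) ^ k * altHarm k := by
  simp_rw [← Finset.sum_Ico_Ico_comm' 1]
  refine Finset.sum_congr rfl fun n hn => ?_
  rw [sum_Ico_succ_eq_sum_Ico_one_add _ (Finset.mem_Ico.1 hn).2.le, Finset.mul_sum]
  refine Finset.sum_congr rfl fun k hk => ?_
  rw [sum_Ico_succ_eq_sum_Ico_one_add _ (Nat.le_add_left n k), Nat.add_sub_cancel, altHarm_eq_sum,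
    Finset.mul_sum, Finset.mul_sum]
  refine Finset.sum_congr rfl fun l hl => ?_
  have hn0 := natCast_ne_zero_of_mem_Ico_one hn
  have hk0 := natCast_ne_zero_of_mem_Ico_one hk
  have hl0 := natCast_ne_zero_of_mem_Ico_one hl
  have hkn : (k : ℝ) + n ≠ 0 := by positivity
  push_cast
  rw [add_sub_cancel_right, add_sub_cancel_right, pow_add, pow_add]
  field_simp
  linear_combination f n * (n : ℝ) * neg_one_pow_mul_self n

lemma sum_middle_pole (f : ℕ → ℝ) (M : ℕ) :
    ∑ x ∈ Finset.Ico 1 M, ∑ y ∈ Finset.Ico 1 x, ∑ z ∈ Finset.Ico 1 y,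
      (-1 : ℝ) ^ x * (-1) ^ y * (f y / (x * (x - y) * (y - z)))
    = ∑ n ∈ Finset.Ico 1 M, f n / n *
        ∑ k ∈ Finset.Ico 1 (M - n), (1 / (k : ℝ) - 1 / (k + n)) * (-1) ^ k * harm n := by
  rw [← Finset.sum_Ico_Ico_comm' 1 M]
  refine Finset.sum_congr rfl fun n hn => ?_
  rw [sum_Ico_succ_eq_sum_Ico_one_add _ (Finset.mem_Ico.1 hn).2.le, Finset.mul_sum]
  refine Finset.sum_congr rfl fun k hk => ?_
  have hreflect : harm n = ∑ z ∈ Finset.Ico 1 n, 1 / ((n - z : ℕ) : ℝ) := by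
    rw [harm_eq_sum, sum_Ico_succ_reflect (fun p => 1 / (p : ℝ)) 0 n, Nat.sub_zero]
  rw [hreflect, Finset.mul_sum, Finset.mul_sum]
  refine Finset.sum_congr rfl fun z hz => ?_
  have hzn := (Finset.mem_Ico.1 hz).2
  have hn0 := natCast_ne_zero_of_mem_Ico_one hn
  have hk0 := natCast_ne_zero_of_mem_Ico_one hk
  have hnz : ((n - z : ℕ) : ℝ) ≠ 0 := Nat.cast_ne_zero.2 (Nat.sub_ne_zero_of_lt hzn)
  have hkn : (k : ℝ) + n ≠ 0 := by positivity
  rw [← Nat.cast_sub hzn.le, Nat.cast_add, add_sub_cancel_right, pow_add]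
  field_simp
  linear_combination f n * (n : ℝ) * neg_one_pow_mul_self n

lemma sum_largest_pole (f : ℕ → ℝ) (M : ℕ) :
    ∑ x ∈ Finset.Ico 1 M, ∑ y ∈ Finset.Ico 1 x, ∑ z ∈ Finset.Ico 1 y,
      (-1 : ℝ) ^ x * (-1) ^ y * (f x / (x * (x - y) * (x - z)))
    = ∑ n ∈ Finset.Ico 1 M, f n / n * altHarmSum n := by
  refine Finset.sum_congr rfl fun n _ => ?_
  have hreflect : altHarmSum n = ∑ z ∈ Finset.Ico 1 n, altHarm (n - z) / ((n - z : ℕ) : ℝ) := by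
    rw [altHarmSum_eq_sum, sum_Ico_succ_reflect (fun q => altHarm q / (q : ℝ)) 0 n, Nat.sub_zero]
  rw [← Finset.sum_Ico_Ico_comm', hreflect, Finset.mul_sum]
  refine Finset.sum_congr rfl fun z hz => ?_
  rw [altHarm_eq_sum, ← sum_Ico_succ_reflect, Finset.sum_div, Finset.mul_sum]
  refine Finset.sum_congr rfl fun y hy => ?_
  have hyn := (Finset.mem_Ico.1 hy).2
  have hzn := (Finset.mem_Ico.1 hz).2
  have hsign : (-1 : ℝ) ^ n * (-1) ^ y = (-1) ^ (n - y) := by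
    rw [← Nat.sub_add_cancel hyn.le, pow_add, mul_assoc, neg_one_pow_mul_self, mul_one,
      Nat.add_sub_cancel]
  rw [hsign, ← Nat.cast_sub hyn.le, ← Nat.cast_sub hzn.le]
  ring

lemma sum_truncEulerSum_eq_sum_poles (m M : ℕ) :
    ∑ a ∈ Finset.Icc 2 (m + 1), ∑ b ∈ Finset.Icc 1 (m + 3 - a - 1),
        truncEulerSum [(a, -1), (b, -1), (m + 3 - a - b, 1)] M
      = ∑ x ∈ Finset.Ico 1 M, ∑ y ∈ Finset.Ico 1 x, ∑ z ∈ Finset.Ico 1 y,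
          (-1 : ℝ) ^ x * (-1) ^ y * (1 / (z : ℝ) ^ m / (x * (x - z) * (y - z))
            - 1 / (y : ℝ) ^ m / (x * (x - y) * (y - z))
            + 1 / (x : ℝ) ^ m / (x * (x - y) * (x - z))) := by
  simp only [truncEulerSum_triple, sum_comm_Ico_triple]
  refine Finset.sum_congr rfl fun x hx => Finset.sum_congr rfl fun y hy =>
    Finset.sum_congr rfl fun z hz => ?_
  have hyx : (y : ℝ) < x := by exact_mod_cast (Finset.mem_Ico.1 hy).2
  have hzy : (z : ℝ) < y := by exact_mod_cast (Finset.mem_Ico.1 hz).2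
  rw [← sum_triple_partial_fractions (natCast_ne_zero_of_mem_Ico_one hx)
    (natCast_ne_zero_of_mem_Ico_one hy) (natCast_ne_zero_of_mem_Ico_one hz) (by linarith)
    (by linarith) (by linarith)]
  simp only [Finset.mul_sum, one_pow, mul_one, mul_one_div]

lemma sum_truncEulerSum_eq_sum_tripleKernel (m M : ℕ) :
    ∑ a ∈ Finset.Icc 2 (m + 1), ∑ b ∈ Finset.Icc 1 (m + 3 - a - 1),
        truncEulerSum [(a, -1), (b, -1), (m + 3 - a - b, 1)] M
      = ∑ n ∈ Finset.Ico 1 M, 1 / (n : ℝ) ^ (m + 1) * tripleKernel M n := by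
  rw [sum_truncEulerSum_eq_sum_poles]
  simp only [mul_add, mul_sub ((-1 : ℝ) ^ _ * _), Finset.sum_add_distrib, Finset.sum_sub_distrib]
  rw [sum_smallest_pole, sum_middle_pole, sum_largest_pole, ← Finset.sum_sub_distrib,
    ← Finset.sum_add_distrib]
  refine Finset.sum_congr rfl fun n _ => ?_
  simp only [tripleKernel, mul_sub _ (altHarm _), Finset.sum_sub_distrib]
  ring

lemma tendsto_sum_tripleKernel (m : ℕ) :
    Tendsto (fun M : ℕ => ∑ n ∈ Finset.Ico 1 M, 1 / (n : ℝ) ^ (m + 1) * tripleKernel M n) atTop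
      (𝓝 (∑ a ∈ Finset.Icc 2 (m + 1), ∑ b ∈ Finset.Icc 1 (m + 3 - a - 1),
        eulerSum3 a b (m + 3 - a - b) (-1) (-1) 1)) := by
  simp only [← sum_truncEulerSum_eq_sum_tripleKernel]
  refine tendsto_finsetSum _ fun a ha => tendsto_finsetSum _ fun b hb => ?_
  rw [Finset.mem_Icc] at ha hb
  exact tendsto_eulerSum3 (by omega) hb.1 (by omega) (by simp) (by simp)

lemma tendsto_sum_tailKernel {u : ℕ} (hu : 1 ≤ u) :
    Tendsto (fun M : ℕ => ∑ n ∈ Finset.Ico 1 M, 1 / (n : ℝ) ^ u * tailKernel M n) atTop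
      (𝓝 (eulerSum3 1 1 u (-1) 1 1 - eulerSum3 1 1 u (-1) 1 (-1)
        + eulerSum2 1 (u + 1) (-1) 1 - eulerSum2 1 (u + 1) (-1) (-1)
        + eulerSum2 2 u (-1) 1 - eulerSum2 2 u (-1) (-1) + eulerSum1 (u + 2) (-1))) := by
  have htriple {e : ℝ} (he : |e| ≤ 1) :=
    tendsto_eulerSum3 (e₂ := 1) le_rfl le_rfl hu (by simp) he
  have hsplit {e : ℝ} (he : |e| ≤ 1) :=
    tendsto_eulerSum2 (s₁ := 1) le_rfl (Nat.le_add_left 1 u) he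
  have hdouble {e : ℝ} (he : |e| ≤ 1) := tendsto_eulerSum2 (s₁ := 2) one_le_two hu he
  have hone : |(1 : ℝ)| ≤ 1 := by simp
  have hneg : |(-1 : ℝ)| ≤ 1 := by simp
  simp only [← truncEulerSum_eq_sum_tailKernel]
  exact ((((((htriple hone).sub (htriple hneg)).add (hsplit hone)).sub (hsplit hneg)).add
    (hdouble hone)).sub (hdouble hneg)).add (tendsto_eulerSum1 (by omega))

/-- For `w ≥ 4`, with `u = w − 2`, `v = w − 1`:
`∑_{a+b+c=w, a≥2} ζ(ā,b̄,c)
  = ζ(1̄,1,u) − ζ(1̄,1,ū) + ζ(1̄,v) − ζ(1̄,v̄) + ζ(2̄,u) − ζ(2̄,ū) + ζ(w̄)`. -/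
theorem sum_triple_barbar_unbar (w : ℕ) (hw : 4 ≤ w) :
    ∑ a ∈ Finset.Icc 2 (w - 2), ∑ b ∈ Finset.Icc 1 (w - a - 1),
        eulerSum3 a b (w - a - b) (-1) (-1) 1
      = eulerSum3 1 1 (w - 2) (-1) 1 1 - eulerSum3 1 1 (w - 2) (-1) 1 (-1)
        + eulerSum2 1 (w - 1) (-1) 1 - eulerSum2 1 (w - 1) (-1) (-1)
        + eulerSum2 2 (w - 2) (-1) 1 - eulerSum2 2 (w - 2) (-1) (-1)
        + eulerSum1 w (-1) := by
  obtain ⟨m, rfl⟩ := Nat.exists_eq_add_of_le' (by omega : 3 ≤ w)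
  have hdiff := (tendsto_sum_tripleKernel m).sub (tendsto_sum_tailKernel (Nat.le_add_left 1 m))
  simp only [← Finset.sum_sub_distrib, ← mul_sub] at hdiff
  exact sub_eq_zero.1
    (tendsto_nhds_unique hdiff (tendsto_sum_tripleKernel_sub_tailKernel (by omega)))
end

section
/- For every integer w ≥ 4, ∑_{a+b+c=w, a≥2, b,c≥1} T(a,b,c) + ∑_{a+b=w−1, a≥2, b≥1} T(a,b,1) = (2/3)·T(2)·T(w−2). -/
open Filter

/-!
Expand `∑ 1 / (x^a y^b z^c)` over all exponents of weight `w` in partial fractions. For odd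
`x > z` and even `y` in between, the pole in `y` cancels after summing over `z`, by the symmetry
`z ↦ y - z`. Summing over the other two variables, the pole in `x = 2r + 1` contributes `-D_r` to
the coefficient of `1 / (2r + 1)^(w - 2)`, where `D_r = ∑_{q ≤ r} O_q / (2q)` and `O_q` is the
`q`-th odd harmonic number, and the pole in `z = 2r + 1` contributes
`∑_q O_q (1 / (2q) - 1 / (2q + 2r + 1)) = ζ(2) / 4 + D_r`: the difference of consecutive `r`
telescopes, and the case `r = 0` comes from squaring the alternating harmonic series. So the
coefficient is `ζ(2) / 4` for every `r`, and the sum factors.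
-/

section

open Finset Topology

section FiniteSums

lemma sum_range_sum_antidiagonal {M : Type*} [AddCommMonoid M] (f : ℕ → ℕ → M) (n : ℕ) :
    ∑ m ∈ range n, ∑ p ∈ antidiagonal m, f p.1 p.2 =
      ∑ i ∈ range n, ∑ j ∈ range (n - i), f i j := by
  simp only [Nat.sum_antidiagonal_eq_sum_range_succ f]
  exact sum_range_diag_flip n f

lemma sum_range_sum_antidiagonal_mul {R : Type*} [NonUnitalNonAssocSemiring R] (f g : ℕ → R)
    (n : ℕ) :
    ∑ m ∈ range n, ∑ p ∈ antidiagonal m, f p.1 * g p.2 =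
      ∑ p ∈ antidiagonal n, f p.1 * ∑ j ∈ range p.2, g j := by
  rw [sum_range_sum_antidiagonal fun i j => f i * g j,
    Nat.sum_antidiagonal_eq_sum_range_succ fun i l => f i * ∑ j ∈ range l, g j, sum_range_succ]
  simp [mul_sum]

lemma sum_antidiagonal_inv_mul_inv {K : Type*} [Field K] {f : ℕ → K} {c : K} {n : ℕ}
    (hc : c ≠ 0) (hf : ∀ i ≤ n, f i ≠ 0) (hadd : ∀ p ∈ antidiagonal n, f p.1 + f p.2 = c) :
    ∑ p ∈ antidiagonal n, (f p.1)⁻¹ * (f p.2)⁻¹ = 2 / c * ∑ i ∈ range (n + 1), (f i)⁻¹ := by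
  have split_inv : ∀ p ∈ antidiagonal n,
      (f p.1)⁻¹ * (f p.2)⁻¹ = c⁻¹ * ((f p.1)⁻¹ + (f p.2)⁻¹) := fun p hp => by
    have h₁ := hf p.1 (HasAntidiagonal.antidiagonal.fst_le hp)
    have h₂ := hf p.2 (HasAntidiagonal.antidiagonal.snd_le hp)
    rw [inv_add_inv h₁ h₂, hadd p hp, div_eq_mul_inv, inv_mul_cancel_left₀ hc, mul_inv]
  have sum_fst : ∑ p ∈ antidiagonal n, (f p.1)⁻¹ = ∑ i ∈ range (n + 1), (f i)⁻¹ :=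
    Nat.sum_antidiagonal_eq_sum_range_succ (fun i _ => (f i)⁻¹) n
  have sum_snd : ∑ p ∈ antidiagonal n, (f p.2)⁻¹ = ∑ i ∈ range (n + 1), (f i)⁻¹ := by
    rw [← sum_fst, ← Nat.sum_antidiagonal_swap]
    rfl
  rw [sum_congr rfl split_inv, ← mul_sum, sum_add_distrib, sum_fst, sum_snd]
  ring

lemma sq_sum_range {R : Type*} [CommSemiring R] (f : ℕ → R) (n : ℕ) :
    (∑ i ∈ range n, f i) ^ 2 =
      ∑ i ∈ range n, f i ^ 2 + 2 * ∑ i ∈ range n, f i * ∑ j ∈ range i, f j := by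
  induction n with
  | zero => simp
  | succ n ih =>
    rw [sum_range_succ, add_sq, ih, sum_range_succ, sum_range_succ (fun i => f i * _)]
    ring

lemma sum_range_sum_range_succ {M : Type*} [AddCommMonoid M] (f : ℕ → ℕ → M) (n : ℕ) :
    ∑ s ∈ range n, ∑ t ∈ range (s + 1), f s t =
      ∑ p ∈ antidiagonal n, ∑ j ∈ range p.2, f (p.1 + j) p.1 := by
  rw [Nat.sum_antidiagonal_eq_sum_range_succ fun t d => ∑ j ∈ range d, f (t + j) t, sum_range_succ]
  simp only [Nat.sub_self, range_zero, sum_empty, add_zero]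
  calc ∑ s ∈ range n, ∑ t ∈ range (s + 1), f s t
      = ∑ t ∈ range n, ∑ s ∈ Ico t n, f s t := by
        simpa only [range_eq_Ico] using (sum_Ico_Ico_comm 0 n fun t s => f s t).symm
    _ = ∑ t ∈ range n, ∑ j ∈ range (n - t), f (t + j) t := by simp only [sum_Ico_eq_sum_range]

end FiniteSums

section AlternatingSums

variable {R : Type*} [CommRing R] [LinearOrder R] [IsStrictOrderedRing R] {a : ℕ → R}

lemma abs_sum_Ico_alternating_le (ha : Antitone a) (ha₀ : ∀ n, 0 ≤ a n) (m n : ℕ) :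
    |∑ i ∈ Ico m n, (-1) ^ i * a i| ≤ a m := by
  have signed_bounds : ∀ d m, 0 ≤ (-1) ^ m * ∑ i ∈ Ico m (m + d), (-1) ^ i * a i ∧
      (-1) ^ m * ∑ i ∈ Ico m (m + d), (-1) ^ i * a i ≤ a m := by
    intro d
    induction d with
    | zero => simpa using ha₀
    | succ d ih =>
      intro m
      have peel : (-1) ^ m * ∑ i ∈ Ico m (m + (d + 1)), (-1) ^ i * a i =
          a m - (-1) ^ (m + 1) * ∑ i ∈ Ico (m + 1) (m + 1 + d), (-1) ^ i * a i := by
        rw [sum_eq_sum_Ico_succ_bot (by omega), show m + 1 + d = m + (d + 1) by ring, mul_add,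
          ← mul_assoc, ← mul_pow, neg_one_mul, neg_neg, one_pow, pow_succ]
        ring
      obtain ⟨hlow, hup⟩ := ih (m + 1)
      have := ha m.le_succ
      rw [peel]
      constructor <;> linarith
  rcases le_total n m with h | h
  · simpa [Ico_eq_empty_of_le h] using ha₀ m
  · obtain ⟨d, rfl⟩ := Nat.exists_eq_add_of_le h
    obtain ⟨hlow, hup⟩ := signed_bounds d m
    calc |∑ i ∈ Ico m (m + d), (-1) ^ i * a i|
        = |(-1) ^ m * ∑ i ∈ Ico m (m + d), (-1) ^ i * a i| := by simp [abs_mul]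
      _ ≤ a m := by rwa [abs_of_nonneg hlow]

lemma abs_sq_sum_alternating_sub_le (ha : Antitone a) (ha₀ : ∀ n, 0 ≤ a n) (n : ℕ) :
    |(∑ i ∈ range (n + 1), (-1) ^ i * a i) ^ 2 -
        ∑ m ∈ range n, ∑ p ∈ antidiagonal m, ((-1) ^ p.1 * a p.1) * ((-1) ^ p.2 * a p.2)| ≤
      ∑ p ∈ antidiagonal n, a p.1 * a p.2 := by
  set v : ℕ → R := fun i => (-1) ^ i * a i with hv
  have sq_eq : (∑ i ∈ range (n + 1), v i) ^ 2 =
      ∑ p ∈ antidiagonal n, v p.1 * ∑ j ∈ range (n + 1), v j := by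
    rw [sq, sum_mul,
      Nat.sum_antidiagonal_eq_sum_range_succ (fun i _ => v i * ∑ j ∈ range (n + 1), v j)]
  rw [sq_eq, sum_range_sum_antidiagonal_mul v v, ← sum_sub_distrib]
  refine (abs_sum_le_sum_abs _ _).trans (sum_le_sum fun p hp => ?_)
  have hle : p.2 ≤ n + 1 := (HasAntidiagonal.antidiagonal.snd_le hp).trans n.le_succ
  rw [← mul_sub, ← sum_Ico_eq_sub _ hle, abs_mul,
    show |v p.1| = a p.1 by simp [hv, abs_mul, abs_of_nonneg (ha₀ _)]]
  exact mul_le_mul_of_nonneg_left (abs_sum_Ico_alternating_le ha ha₀ _ _) (ha₀ _)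

end AlternatingSums

section Limits

lemma tendsto_two_mul_atTop : Tendsto (fun n : ℕ => 2 * n) atTop atTop :=
  tendsto_id.const_mul_atTop' two_pos

lemma tendsto_sum_range_add_sub_sum_range {E : Type*} [AddCommGroup E] [TopologicalSpace E]
    [ContinuousAdd E] {a : ℕ → E} (ha : Tendsto a atTop (𝓝 0)) (d : ℕ) :
    Tendsto (fun n => ∑ i ∈ range (n + d), a i - ∑ i ∈ range n, a i) atTop (𝓝 0) := by
  simp only [sum_range_add_sub_sum_range]
  simpa using tendsto_finsetSum (range d) fun i _ => (tendsto_add_atTop_iff_nat i).mpr ha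

lemma tendsto_sum_range_of_dominated {E : Type*} [NormedAddCommGroup E] [CompleteSpace E]
    {f : ℕ → ℕ → E} {g : ℕ → E} {bound : ℕ → ℝ} (hbound : Summable bound)
    (hlim : ∀ r, Tendsto (fun n => f n r) atTop (𝓝 (g r)))
    (hle : ∀ n, ∀ r < n, ‖f n r‖ ≤ bound r) :
    Tendsto (fun n => ∑ r ∈ range n, f n r) atTop (𝓝 (∑' r, g r)) := by
  have hbound₀ (r : ℕ) : 0 ≤ bound r := (norm_nonneg _).trans (hle (r + 1) r r.lt_succ_self)
  refine (tendsto_tsum_of_dominated_convergence (f := fun n r => if r < n then f n r else 0)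
    hbound (fun r => (hlim r).congr' ?_) (.of_forall fun n r => ?_)).congr fun n => ?_
  · filter_upwards [eventually_gt_atTop r] with n hn
    rw [if_pos hn]
  · split_ifs with hr
    · exact hle n r hr
    · simpa using hbound₀ r
  · rw [tsum_eq_sum (s := range n) fun r hr => if_neg (by simpa using hr)]
    exact sum_congr rfl fun r hr => if_pos (mem_range.mp hr)

lemma tendsto_sum_Icc_one_iff_even {f : ℕ → ℝ} (hf : ∀ m, 0 ≤ f m) {l : ℝ} :
    Tendsto (fun N => ∑ m ∈ Icc 1 N, f m) atTop (𝓝 l) ↔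
      Tendsto (fun M => ∑ m ∈ Icc 1 (2 * M), f m) atTop (𝓝 l) :=
  tendsto_iff_tendsto_subseq_of_monotone
    (fun _ _ h => sum_le_sum_of_subset_of_nonneg (Icc_subset_Icc_right h) fun m _ _ => hf m)
    tendsto_two_mul_atTop

end Limits

section OddHarmonic

/-- The odd harmonic number `O_n = ∑_{p < n} 1 / (2p + 1)`. -/
noncomputable def oddHarmonic (n : ℕ) : ℝ := ∑ p ∈ range n, (2 * (p : ℝ) + 1)⁻¹

@[simp]
lemma oddHarmonic_zero : oddHarmonic 0 = 0 := sum_range_zero _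

lemma oddHarmonic_succ (n : ℕ) : oddHarmonic (n + 1) = oddHarmonic n + (2 * (n : ℝ) + 1)⁻¹ :=
  sum_range_succ _ _

lemma oddHarmonic_nonneg (n : ℕ) : 0 ≤ oddHarmonic n :=
  sum_nonneg fun _ _ => by positivity

lemma tendsto_inv_two_mul_add_one :
    Tendsto (fun n : ℕ => (2 * (n : ℝ) + 1)⁻¹) atTop (𝓝 0) :=
  tendsto_inv_atTop_zero.comp <| tendsto_atTop_add_const_right _ _ <|
    tendsto_natCast_atTop_atTop.const_mul_atTop two_pos

lemma tendsto_oddHarmonic_div_atTop : Tendsto (fun n => oddHarmonic n / n) atTop (𝓝 0) := by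
  simpa only [oddHarmonic, inv_mul_eq_div] using tendsto_inv_two_mul_add_one.cesaro

lemma sum_antidiagonal_inv_odd_mul_inv_odd (n : ℕ) :
    ∑ p ∈ antidiagonal n, (2 * (p.1 : ℝ) + 1)⁻¹ * (2 * (p.2 : ℝ) + 1)⁻¹ =
      oddHarmonic (n + 1) / (n + 1) := by
  rw [sum_antidiagonal_inv_mul_inv (f := fun i : ℕ => 2 * (i : ℝ) + 1) (c := 2 * (n + 1))
    (by positivity) (fun i _ => by positivity) fun p hp => ?_, ← oddHarmonic]
  · field_simp
  · rw [← mem_antidiagonal.mp hp]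
    push_cast
    ring

/-- The sum `D_r = ∑_{1 ≤ q ≤ r} O_q / (2q)` of weighted odd harmonic numbers. -/
noncomputable def oddHarmonicSum (r : ℕ) : ℝ :=
  ∑ q ∈ range r, oddHarmonic (q + 1) / (2 * (q + 1))

@[simp]
lemma oddHarmonicSum_zero : oddHarmonicSum 0 = 0 := sum_range_zero _

lemma oddHarmonicSum_succ (r : ℕ) :
    oddHarmonicSum (r + 1) = oddHarmonicSum r + oddHarmonic (r + 1) / (2 * (r + 1)) :=
  sum_range_succ _ _

lemma sum_antidiagonal_inv_odd_mul_oddHarmonic (n : ℕ) :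
    ∑ p ∈ antidiagonal n, (2 * (p.1 : ℝ) + 1)⁻¹ * oddHarmonic p.2 = 2 * oddHarmonicSum n := by
  have cauchy : ∑ m ∈ range n, ∑ p ∈ antidiagonal m,
      (2 * (p.1 : ℝ) + 1)⁻¹ * (2 * (p.2 : ℝ) + 1)⁻¹ =
        ∑ p ∈ antidiagonal n, (2 * (p.1 : ℝ) + 1)⁻¹ * oddHarmonic p.2 :=
    sum_range_sum_antidiagonal_mul (fun i : ℕ => (2 * (i : ℝ) + 1)⁻¹)
      (fun j : ℕ => (2 * (j : ℝ) + 1)⁻¹) n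
  rw [← cauchy, oddHarmonicSum, mul_sum]
  refine sum_congr rfl fun m _ => ?_
  rw [sum_antidiagonal_inv_odd_mul_inv_odd]
  field_simp

lemma sum_antidiagonal_oddHarmonic_div (n : ℕ) :
    ∑ p ∈ antidiagonal n, oddHarmonic p.2 / (2 * p.2) = oddHarmonicSum n := by
  rw [← Nat.sum_antidiagonal_swap,
    Nat.sum_antidiagonal_eq_sum_range_succ_mk, sum_range_succ']
  simp [oddHarmonicSum]

lemma inv_sqrt_succ_add_sqrt (n : ℕ) : (√((n : ℝ) + 1) + √n)⁻¹ = √((n : ℝ) + 1) - √n := by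
  have hne : √((n : ℝ) + 1) + √n ≠ 0 := by positivity
  rw [inv_eq_one_div, div_eq_iff hne, mul_comm, ← sq_sub_sq, Real.sq_sqrt (by positivity),
    Real.sq_sqrt (by positivity), add_sub_cancel_left]

lemma oddHarmonic_le_sqrt (n : ℕ) : oddHarmonic n ≤ √n := by
  have sqrt_le (m : ℕ) : √(m : ℝ) ≤ m :=
    Real.sqrt_le_iff.mpr ⟨m.cast_nonneg, by exact_mod_cast Nat.le_self_pow two_ne_zero m⟩
  induction n with
  | zero => simp
  | succ n ih =>
    have step : (2 * (n : ℝ) + 1)⁻¹ ≤ √((n : ℝ) + 1) - √n := by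
      rw [← inv_sqrt_succ_add_sqrt]
      refine inv_anti₀ (by positivity) ?_
      have h := sqrt_le (n + 1)
      push_cast at h
      linarith [sqrt_le n]
    rw [oddHarmonic_succ]
    push_cast
    linarith

lemma oddHarmonicSum_le_sqrt (r : ℕ) : oddHarmonicSum r ≤ √r := by
  induction r with
  | zero => simp
  | succ r ih =>
    have hO : oddHarmonic (r + 1) ≤ √((r : ℝ) + 1) := by
      exact_mod_cast oddHarmonic_le_sqrt (r + 1)
    have step : oddHarmonic (r + 1) / (2 * (r + 1)) ≤ √((r : ℝ) + 1) - √r :=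
      calc oddHarmonic (r + 1) / (2 * (r + 1))
          ≤ √((r : ℝ) + 1) / (2 * (r + 1)) := by gcongr
        _ = (√((r : ℝ) + 1) + √((r : ℝ) + 1))⁻¹ := by
            rw [mul_comm, ← div_div, Real.sqrt_div_self, ← two_mul, mul_inv]
            ring
        _ ≤ (√((r : ℝ) + 1) + √r)⁻¹ := by gcongr; linarith
        _ = √((r : ℝ) + 1) - √r := inv_sqrt_succ_add_sqrt r
    rw [oddHarmonicSum_succ]
    push_cast
    linarith

end OddHarmonic

section PoleCoefficient

/-- The `q`-th term `O_q (1 / (2q) - 1 / (2q + 2r + 1))` of the coefficient of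
`1 / (2r + 1) ^ (w - 2)`. It vanishes at `q = 0`, where `O_0 = 0`. -/
noncomputable def poleTerm (r q : ℕ) : ℝ :=
  oddHarmonic q * ((2 * (q : ℝ))⁻¹ - (2 * (q : ℝ) + 2 * r + 1)⁻¹)

@[simp]
lemma poleTerm_zero_right (r : ℕ) : poleTerm r 0 = 0 := by simp [poleTerm]

lemma poleTerm_nonneg (r q : ℕ) : 0 ≤ poleTerm r q := by
  rcases q.eq_zero_or_pos with rfl | hq
  · simp
  · have : (0 : ℝ) < q := by exact_mod_cast hq
    refine mul_nonneg (oddHarmonic_nonneg q) (sub_nonneg.mpr ?_)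
    gcongr
    linarith [r.cast_nonneg (α := ℝ)]

lemma poleTerm_le_succ (r q : ℕ) : poleTerm r q ≤ poleTerm (r + 1) q := by
  refine mul_le_mul_of_nonneg_left ?_ (oddHarmonic_nonneg q)
  gcongr
  exact r.le_succ

lemma sum_range_poleTerm_succ_sub (r n : ℕ) :
    ∑ q ∈ range n, (poleTerm (r + 1) q - poleTerm r q) =
      (oddHarmonic (r + 1) - (oddHarmonic (n + (r + 1)) - oddHarmonic n)) / (2 * (r + 1))
        - oddHarmonic n / (2 * n + 2 * r + 1) := by
  induction n with
  | zero => simp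
  | succ n ih =>
    rw [sum_range_succ, ih, show n + 1 + (r + 1) = n + (r + 1) + 1 by ring,
      oddHarmonic_succ n, oddHarmonic_succ (n + (r + 1)), poleTerm, poleTerm]
    push_cast
    field_simp
    ring

lemma hasSum_poleTerm_succ_sub (r : ℕ) :
    HasSum (fun q => poleTerm (r + 1) q - poleTerm r q) (oddHarmonic (r + 1) / (2 * (r + 1))) := by
  have hshift : Tendsto (fun n => oddHarmonic (n + (r + 1)) - oddHarmonic n) atTop (𝓝 0) :=
    tendsto_sum_range_add_sub_sum_range tendsto_inv_two_mul_add_one (r + 1)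
  have hdiv : Tendsto (fun n : ℕ => oddHarmonic n / (2 * n + 2 * r + 1)) atTop (𝓝 0) := by
    refine squeeze_zero' (.of_forall fun n => div_nonneg (oddHarmonic_nonneg n) (by positivity))
      ?_ tendsto_oddHarmonic_div_atTop
    filter_upwards [eventually_gt_atTop 0] with n hn
    have := oddHarmonic_nonneg n
    gcongr
    linarith [r.cast_nonneg (α := ℝ), n.cast_nonneg (α := ℝ)]
  rw [hasSum_iff_tendsto_nat_of_nonneg fun q => sub_nonneg.mpr (poleTerm_le_succ r q)]
  simp only [sum_range_poleTerm_succ_sub]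
  simpa using ((hshift.const_sub (oddHarmonic (r + 1))).div_const (2 * ((r : ℝ) + 1))).sub hdiv

end PoleCoefficient

section BaseCase

/-- The alternating harmonic number `∑_{i < n} (-1)^i / (i + 1)`. -/
noncomputable def altHarmonic (n : ℕ) : ℝ := ∑ i ∈ range n, (-1) ^ i * ((i : ℝ) + 1)⁻¹

lemma altHarmonic_succ (n : ℕ) :
    altHarmonic (n + 1) = altHarmonic n + (-1) ^ n * ((n : ℝ) + 1)⁻¹ :=
  sum_range_succ _ _

lemma harmonic_add_altHarmonic (n : ℕ) :
    (harmonic n : ℝ) + altHarmonic n = 2 * oddHarmonic ((n + 1) / 2) := by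
  induction n with
  | zero => simp [altHarmonic]
  | succ n ih =>
    have step : (harmonic (n + 1) : ℝ) + altHarmonic (n + 1) =
        2 * oddHarmonic ((n + 1) / 2) + (1 + (-1) ^ n) * ((n : ℝ) + 1)⁻¹ := by
      rw [harmonic_succ, altHarmonic_succ, ← ih]
      push_cast
      ring
    rw [step]
    rcases n.even_or_odd' with ⟨q, rfl | rfl⟩
    · rw [show (2 * q + 1) / 2 = q by omega, show (2 * q + 1 + 1) / 2 = q + 1 by omega,
        oddHarmonic_succ, pow_mul]
      push_cast
      ring
    · rw [show (2 * q + 1 + 1) / 2 = q + 1 by omega, show (2 * q + 1 + 1 + 1) / 2 = q + 1 by omega]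
      simp [pow_succ, pow_mul]

lemma sum_antidiagonal_inv_succ_mul_inv_succ (n : ℕ) :
    ∑ p ∈ antidiagonal n, ((p.1 : ℝ) + 1)⁻¹ * ((p.2 : ℝ) + 1)⁻¹ =
      2 / (n + 2) * harmonic (n + 1) := by
  rw [sum_antidiagonal_inv_mul_inv (f := fun i : ℕ => (i : ℝ) + 1) (c := (n : ℝ) + 2)
    (by positivity) (fun i _ => by positivity) fun p hp => ?_]
  · simp [harmonic]
  · rw [← mem_antidiagonal.mp hp]
    push_cast
    ring

lemma tendsto_sum_antidiagonal_inv_succ_mul_inv_succ :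
    Tendsto (fun n : ℕ => ∑ p ∈ antidiagonal n, ((p.1 : ℝ) + 1)⁻¹ * ((p.2 : ℝ) + 1)⁻¹)
      atTop (𝓝 0) := by
  have mean : Tendsto (fun n : ℕ => (n : ℝ)⁻¹ * (harmonic n : ℝ)) atTop (𝓝 0) := by
    simpa [harmonic] using tendsto_one_div_add_atTop_nhds_zero_nat (𝕜 := ℝ).cesaro
  refine squeeze_zero (fun n => sum_nonneg fun p _ => by positivity) (fun n => ?_)
    (by simpa only [mul_zero] using ((tendsto_add_atTop_iff_nat 1).mpr mean).const_mul 2)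
  have harmonic_nonneg : (0 : ℝ) ≤ harmonic (n + 1) := by
    exact_mod_cast (harmonic_pos n.succ_ne_zero).le
  rw [sum_antidiagonal_inv_succ_mul_inv_succ, ← mul_assoc, ← div_eq_mul_inv]
  push_cast
  gcongr
  norm_num

lemma sum_range_sum_antidiagonal_alternating (n : ℕ) :
    ∑ m ∈ range n, ∑ p ∈ antidiagonal m,
        ((-1) ^ p.1 * ((p.1 : ℝ) + 1)⁻¹) * ((-1) ^ p.2 * ((p.2 : ℝ) + 1)⁻¹) =
      -2 * ∑ m ∈ range (n + 1), (-1) ^ m * ((m : ℝ) + 1)⁻¹ * harmonic m := by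
  rw [sum_range_succ', harmonic_zero, Rat.cast_zero, mul_zero, add_zero, mul_sum]
  refine sum_congr rfl fun m _ => ?_
  have pull_sign : ∀ p ∈ antidiagonal m,
      ((-1) ^ p.1 * ((p.1 : ℝ) + 1)⁻¹) * ((-1) ^ p.2 * ((p.2 : ℝ) + 1)⁻¹) =
        (-1) ^ m * (((p.1 : ℝ) + 1)⁻¹ * ((p.2 : ℝ) + 1)⁻¹) := fun p hp => by
    rw [← mem_antidiagonal.mp hp, pow_add]
    ring
  rw [sum_congr rfl pull_sign, ← mul_sum, sum_antidiagonal_inv_succ_mul_inv_succ]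
  push_cast
  ring

lemma sum_alternating_oddHarmonic (n : ℕ) :
    ∑ m ∈ range (2 * n + 1), (-1) ^ m * ((m : ℝ) + 1)⁻¹ * oddHarmonic ((m + 1) / 2) =
      -∑ q ∈ range (n + 1), poleTerm 0 q := by
  induction n with
  | zero => simp
  | succ n ih =>
    rw [show 2 * (n + 1) + 1 = 2 * n + 1 + 1 + 1 by ring, sum_range_succ, sum_range_succ, ih,
      sum_range_succ (poleTerm 0) (n + 1), poleTerm, show (2 * n + 1 + 1) / 2 = n + 1 by omega,
      show (2 * n + 1 + 1 + 1) / 2 = n + 1 by omega, pow_succ _ (2 * n + 1), pow_succ,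
      (even_two_mul n).neg_one_pow]
    push_cast
    ring

lemma four_mul_sum_range_poleTerm_zero (n : ℕ) :
    4 * ∑ q ∈ range (n + 1), poleTerm 0 q =
      ∑ m ∈ range (2 * n + 1), (((m : ℝ) + 1) ^ 2)⁻¹ - (altHarmonic (2 * n + 1) ^ 2 -
        ∑ m ∈ range (2 * n), ∑ p ∈ antidiagonal m,
          ((-1) ^ p.1 * ((p.1 : ℝ) + 1)⁻¹) * ((-1) ^ p.2 * ((p.2 : ℝ) + 1)⁻¹)) := by
  have combine : ∑ m ∈ range (2 * n + 1), (-1) ^ m * ((m : ℝ) + 1)⁻¹ * altHarmonic m +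
      ∑ m ∈ range (2 * n + 1), (-1) ^ m * ((m : ℝ) + 1)⁻¹ * harmonic m =
        -2 * ∑ q ∈ range (n + 1), poleTerm 0 q := by
    rw [neg_mul, ← mul_neg, ← sum_alternating_oddHarmonic, mul_sum, ← sum_add_distrib]
    refine sum_congr rfl fun m _ => ?_
    linear_combination (-1) ^ m * ((m : ℝ) + 1)⁻¹ * harmonic_add_altHarmonic m
  have square : altHarmonic (2 * n + 1) ^ 2 = ∑ m ∈ range (2 * n + 1), (((m : ℝ) + 1) ^ 2)⁻¹ +
      2 * ∑ m ∈ range (2 * n + 1), (-1) ^ m * ((m : ℝ) + 1)⁻¹ * altHarmonic m := by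
    rw [altHarmonic, sq_sum_range]
    simp [mul_pow, ← pow_mul, mul_comm _ 2, altHarmonic]
  rw [square, sum_range_sum_antidiagonal_alternating]
  linear_combination 2 * combine

/-- The product of the alternating harmonic series with itself may be summed by squares or by
antidiagonals; comparing the two expresses `∑ poleTerm 0` through `ζ(2)`. -/
lemma hasSum_poleTerm_zero : HasSum (poleTerm 0) (Real.pi ^ 2 / 24) := by
  have antitone_inv : Antitone fun i : ℕ => ((i : ℝ) + 1)⁻¹ := fun i j h => by
    dsimp only
    gcongr
  have square_sub_cauchy : Tendsto (fun n => altHarmonic (n + 1) ^ 2 -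
      ∑ m ∈ range n, ∑ p ∈ antidiagonal m,
        ((-1) ^ p.1 * ((p.1 : ℝ) + 1)⁻¹) * ((-1) ^ p.2 * ((p.2 : ℝ) + 1)⁻¹)) atTop (𝓝 0) :=
    squeeze_zero_norm (fun n => abs_sq_sum_alternating_sub_le antitone_inv
      (fun i => by positivity) n) tendsto_sum_antidiagonal_inv_succ_mul_inv_succ
  have zeta_two : Tendsto (fun n => ∑ m ∈ range n, (((m : ℝ) + 1) ^ 2)⁻¹) atTop
      (𝓝 (Real.pi ^ 2 / 6)) := by
    have := (hasSum_nat_add_iff' 1).mpr hasSum_zeta_two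
    simpa using this.tendsto_sum_nat
  have limit := ((((tendsto_add_atTop_iff_nat 1).mpr zeta_two).sub square_sub_cauchy).comp
    tendsto_two_mul_atTop).div_const 4
  rw [hasSum_iff_tendsto_nat_of_nonneg (poleTerm_nonneg 0), ← tendsto_add_atTop_iff_nat 1]
  convert limit using 2 with n
  · rw [eq_div_iff four_ne_zero, mul_comm]
    exact four_mul_sum_range_poleTerm_zero n
  · ring

lemma hasSum_poleTerm (r : ℕ) :
    HasSum (poleTerm r) (Real.pi ^ 2 / 24 + oddHarmonicSum r) := by
  induction r with
  | zero => simpa using hasSum_poleTerm_zero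
  | succ r ih =>
    simpa [oddHarmonicSum_succ, add_assoc] using ih.add (hasSum_poleTerm_succ_sub r)

end BaseCase

section WeightSum

/-- The combination `∑_{a+b+c=k+4} F(a, b, c) + ∑_{a+b=k+3} F(a, b, 1)`, with `a ≥ 2` and
`b, c ≥ 1`, of the left-hand side of the theorem in weight `k + 4`. The summation indices are
shifted so as to run over antidiagonals. -/
def weightSum {M : Type*} [AddCommMonoid M] (k : ℕ) (F : ℕ → ℕ → ℕ → M) : M :=
  ∑ p ∈ antidiagonal k,
    ((∑ q ∈ antidiagonal p.2, F (p.1 + 2) (q.1 + 1) (q.2 + 1)) + F (p.1 + 2) (p.2 + 1) 1)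

lemma sum_antidiagonal_add_fst {M : Type*} [AddCommMonoid M] (f : ℕ → ℕ → M) (i n : ℕ) :
    ∑ p ∈ antidiagonal n, f (p.1 + i) p.2 = ∑ a ∈ Icc i (n + i), f a (n + i - a) := by
  rw [Nat.sum_antidiagonal_eq_sum_range_succ fun a b => f (a + i) b,
    ← Ico_add_one_right_eq_Icc, sum_Ico_eq_sum_range]
  refine sum_congr (by rw [add_right_comm, Nat.add_sub_cancel, Nat.succ_eq_add_one]) fun a _ => ?_
  rw [add_comm i, Nat.add_sub_add_right]

lemma weightSum_eq_sum_Icc {M : Type*} [AddCommMonoid M] (k : ℕ) (F : ℕ → ℕ → ℕ → M) :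
    weightSum k F =
      (∑ a ∈ Icc 2 (k + 2), ∑ b ∈ Icc 1 (k + 4 - a - 1), F a b (k + 4 - a - b)) +
        ∑ a ∈ Icc 2 (k + 2), F a (k + 4 - 1 - a) 1 := by
  rw [weightSum, sum_add_distrib, sum_antidiagonal_add_fst (fun a n => F a (n + 1) 1),
    sum_antidiagonal_add_fst
      fun a n => ∑ q ∈ antidiagonal n, F a (q.1 + 1) (q.2 + 1)]
  simp only [fun a => sum_antidiagonal_add_fst (fun b n => F a b (n + 1)) 1]
  congr 1
  · refine sum_congr rfl fun a ha => ?_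
    rw [mem_Icc] at ha
    refine sum_congr (by congr 1; omega) fun b hb => ?_
    rw [mem_Icc] at hb
    congr 1
    omega
  · refine sum_congr rfl fun a ha => ?_
    rw [mem_Icc] at ha
    congr 1
    omega

lemma weightSum_finsetSum {ι M : Type*} [AddCommMonoid M] (k : ℕ) (s : Finset ι)
    (F : ι → ℕ → ℕ → ℕ → M) :
    weightSum k (fun a b c => ∑ i ∈ s, F i a b c) = ∑ i ∈ s, weightSum k (F i) := by
  simp only [weightSum, sum_comm (t := s), sum_add_distrib]

lemma weightSum_const_mul {R : Type*} [NonUnitalNonAssocSemiring R] (k : ℕ) (r : R)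
    (F : ℕ → ℕ → ℕ → R) :
    weightSum k (fun a b c => r * F a b c) = r * weightSum k F := by
  simp only [weightSum, mul_sum, mul_add]

lemma tendsto_weightSum {ι M : Type*} [AddCommMonoid M] [TopologicalSpace M] [ContinuousAdd M]
    {l : Filter ι} {k : ℕ} {F : ℕ → ℕ → ℕ → ι → M} {G : ℕ → ℕ → ℕ → M}
    (h : ∀ a b c, 2 ≤ a → 1 ≤ b → 1 ≤ c → Tendsto (F a b c) l (𝓝 (G a b c))) :
    Tendsto (fun i => weightSum k fun a b c => F a b c i) l (𝓝 (weightSum k G)) :=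
  tendsto_finsetSum _ fun _ _ =>
    (tendsto_finsetSum _ fun _ _ => h _ _ _ (by omega) (by omega) (by omega)).add
      (h _ _ _ (by omega) (by omega) le_rfl)

section Ordered

variable {M : Type*} [AddCommMonoid M] [PartialOrder M] [IsOrderedAddMonoid M]

lemma weightSum_mono {F G : ℕ → ℕ → ℕ → M} (k : ℕ) (h : ∀ a b c, F a b c ≤ G a b c) :
    weightSum k F ≤ weightSum k G :=
  sum_le_sum fun _ _ => add_le_add (sum_le_sum fun _ _ => h _ _ _) (h _ _ _)

lemma le_weightSum {F : ℕ → ℕ → ℕ → M} (hF : ∀ a b c, 0 ≤ F a b c) (i j l : ℕ) :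
    F (i + 2) (j + 1) (l + 1) ≤ weightSum (i + (j + l)) F := by
  have inner_nonneg (p : ℕ × ℕ) :
      0 ≤ ∑ q ∈ antidiagonal p.2, F (p.1 + 2) (q.1 + 1) (q.2 + 1) :=
    sum_nonneg fun _ _ => hF _ _ _
  calc F (i + 2) (j + 1) (l + 1)
      ≤ ∑ q ∈ antidiagonal (j + l), F (i + 2) (q.1 + 1) (q.2 + 1) :=
        single_le_sum (f := fun q : ℕ × ℕ => F (i + 2) (q.1 + 1) (q.2 + 1))
          (fun _ _ => hF _ _ _) (mem_antidiagonal.mpr (rfl : (j, l).1 + (j, l).2 = j + l))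
    _ ≤ (∑ q ∈ antidiagonal (j + l), F (i + 2) (q.1 + 1) (q.2 + 1)) + F (i + 2) (j + l + 1) 1 :=
        le_add_of_nonneg_right (hF _ _ _)
    _ ≤ weightSum (i + (j + l)) F :=
        single_le_sum (f := fun p : ℕ × ℕ =>
            (∑ q ∈ antidiagonal p.2, F (p.1 + 2) (q.1 + 1) (q.2 + 1)) + F (p.1 + 2) (p.2 + 1) 1)
          (fun p _ => add_nonneg (inner_nonneg p) (hF _ _ _))
          (mem_antidiagonal.mpr (rfl : (i, j + l).1 + (i, j + l).2 = i + (j + l)))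

end Ordered

end WeightSum

section PartialFractions

variable {K : Type*} [Field K] {x y z : K}

lemma sum_antidiagonal_inv_pow_succ_mul_inv_pow_succ (hx : x ≠ 0) (hy : y ≠ 0) (hxy : x ≠ y)
    (n : ℕ) :
    ∑ p ∈ antidiagonal n, (x ^ (p.1 + 1))⁻¹ * (y ^ (p.2 + 1))⁻¹ =
      (x - y)⁻¹ * ((y ^ (n + 1))⁻¹ - (x ^ (n + 1))⁻¹) := by
  have geom : (∑ p ∈ antidiagonal n, x⁻¹ ^ p.1 * y⁻¹ ^ p.2) * (x⁻¹ - y⁻¹) =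
      x⁻¹ ^ (n + 1) - y⁻¹ ^ (n + 1) := by
    rw [Nat.sum_antidiagonal_eq_sum_range_succ fun i j => x⁻¹ ^ i * y⁻¹ ^ j]
    exact (Commute.all _ _).geom_sum₂_mul (n + 1)
  have factor : ∑ p ∈ antidiagonal n, (x ^ (p.1 + 1))⁻¹ * (y ^ (p.2 + 1))⁻¹ =
      x⁻¹ * y⁻¹ * ∑ p ∈ antidiagonal n, x⁻¹ ^ p.1 * y⁻¹ ^ p.2 := by
    rw [mul_sum]
    refine sum_congr rfl fun p _ => ?_
    ring
  rw [inv_sub_inv hx hy] at geom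
  rw [factor, eq_inv_mul_iff_mul_eq₀ (sub_ne_zero.mpr hxy), ← inv_pow, ← inv_pow, ← neg_inj,
    neg_sub, ← geom]
  field_simp
  ring

lemma weightSum_inv_monomial (hx : x ≠ 0) (hy : y ≠ 0) (hz : z ≠ 0) (hxy : x ≠ y) (hxz : x ≠ z)
    (hyz : y ≠ z) (k : ℕ) :
    weightSum k (fun a b c => (x ^ a * y ^ b * z ^ c)⁻¹) =
      (x ^ (k + 2))⁻¹ * ((x - y)⁻¹ * ((x - z)⁻¹ - z⁻¹)) +
        x⁻¹ * (x - y)⁻¹ * (y ^ (k + 1))⁻¹ * (z⁻¹ - (y - z)⁻¹) +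
          (z ^ (k + 2))⁻¹ * ((y - z)⁻¹ * ((x - z)⁻¹ - x⁻¹)) := by
  have inner (p : ℕ × ℕ) :
      (∑ q ∈ antidiagonal p.2, (x ^ (p.1 + 2) * y ^ (q.1 + 1) * z ^ (q.2 + 1))⁻¹) +
          (x ^ (p.1 + 2) * y ^ (p.2 + 1) * z ^ 1)⁻¹ =
        x⁻¹ * ((y - z)⁻¹ * ((x ^ (p.1 + 1))⁻¹ * (z ^ (p.2 + 1))⁻¹) +
          (z⁻¹ - (y - z)⁻¹) * ((x ^ (p.1 + 1))⁻¹ * (y ^ (p.2 + 1))⁻¹)) := by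
    simp only [mul_inv, mul_assoc, ← mul_sum,
      sum_antidiagonal_inv_pow_succ_mul_inv_pow_succ hy hz hyz]
    ring
  have resolve_xy : (x - y)⁻¹ * (x - z)⁻¹ = (y - z)⁻¹ * ((x - y)⁻¹ - (x - z)⁻¹) := by
    rw [inv_sub_inv (sub_ne_zero.mpr hxy) (sub_ne_zero.mpr hxz), sub_sub_sub_cancel_left]
    have := sub_ne_zero.mpr hyz
    field_simp
  have resolve_xz : x⁻¹ * (x - z)⁻¹ = z⁻¹ * ((x - z)⁻¹ - x⁻¹) := by
    rw [inv_sub_inv (sub_ne_zero.mpr hxz) hx, sub_sub_cancel]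
    field_simp
  simp only [weightSum, inner, ← mul_sum, sum_add_distrib,
    sum_antidiagonal_inv_pow_succ_mul_inv_pow_succ hx hz hxz,
    sum_antidiagonal_inv_pow_succ_mul_inv_pow_succ hx hy hxy]
  linear_combination (-(x ^ (k + 2))⁻¹) * resolve_xy + (z ^ (k + 1))⁻¹ * (y - z)⁻¹ * resolve_xz

end PartialFractions

section RowSums

lemma sum_range_inv_odd_reflect (n : ℕ) :
    ∑ j ∈ range n, (2 * (n : ℝ) - 2 * j - 1)⁻¹ = oddHarmonic n := by
  rw [oddHarmonic, ← sum_range_reflect]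
  refine sum_congr rfl fun j hj => ?_
  rw [Nat.sub_sub, Nat.cast_sub (by have := mem_range.mp hj; omega)]
  push_cast
  ring_nf

lemma sum_row_largest (u : ℕ) :
    ∑ s ∈ range u, ∑ t ∈ range (s + 1), (2 * (u : ℝ) + 1 - (2 * s + 2))⁻¹ *
        ((2 * (u : ℝ) + 1 - (2 * t + 1))⁻¹ - (2 * (t : ℝ) + 1)⁻¹) = -oddHarmonicSum u := by
  rw [sum_range_sum_range_succ fun s t : ℕ => (2 * (u : ℝ) + 1 - (2 * s + 2))⁻¹ *
    ((2 * (u : ℝ) + 1 - (2 * t + 1))⁻¹ - (2 * (t : ℝ) + 1)⁻¹)]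
  have inner : ∀ p ∈ antidiagonal u, ∑ j ∈ range p.2,
      (2 * (u : ℝ) + 1 - (2 * (p.1 + j : ℕ) + 2))⁻¹ *
        ((2 * (u : ℝ) + 1 - (2 * p.1 + 1))⁻¹ - (2 * (p.1 : ℝ) + 1)⁻¹) =
      oddHarmonic p.2 / (2 * p.2) - (2 * (p.1 : ℝ) + 1)⁻¹ * oddHarmonic p.2 := fun p hp => by
    rw [← mem_antidiagonal.mp hp, ← sum_mul, ← sum_range_inv_odd_reflect p.2]
    push_cast
    ring_nf
  rw [sum_congr rfl inner, sum_sub_distrib, sum_antidiagonal_oddHarmonic_div,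
    sum_antidiagonal_inv_odd_mul_oddHarmonic]
  ring

/-- The reflection `z ↦ y - z` permutes the odd `z < y`, so the two terms cancel. -/
lemma sum_row_middle (s : ℕ) :
    ∑ t ∈ range (s + 1), ((2 * (t : ℝ) + 1)⁻¹ - (2 * (s : ℝ) + 2 - (2 * t + 1))⁻¹) = 0 := by
  have reflect := sum_range_inv_odd_reflect (s + 1)
  rw [oddHarmonic] at reflect
  rw [sum_sub_distrib, ← reflect, sub_eq_zero]
  refine sum_congr rfl fun t _ => ?_
  push_cast
  ring_nf

lemma sum_row_smallest (u k : ℕ) :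
    ∑ s ∈ range u, ∑ t ∈ range (s + 1), ((2 * (t : ℝ) + 1) ^ k)⁻¹ *
        ((2 * (s : ℝ) + 2 - (2 * t + 1))⁻¹ *
          ((2 * (u : ℝ) + 1 - (2 * t + 1))⁻¹ - (2 * (u : ℝ) + 1)⁻¹)) =
      ∑ p ∈ antidiagonal u, ((2 * (p.1 : ℝ) + 1) ^ k)⁻¹ * poleTerm p.1 p.2 := by
  rw [sum_range_sum_range_succ fun s t : ℕ => ((2 * (t : ℝ) + 1) ^ k)⁻¹ *
    ((2 * (s : ℝ) + 2 - (2 * t + 1))⁻¹ *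
      ((2 * (u : ℝ) + 1 - (2 * t + 1))⁻¹ - (2 * (u : ℝ) + 1)⁻¹))]
  refine sum_congr rfl fun p hp => ?_
  rw [← mem_antidiagonal.mp hp, ← mul_sum, ← sum_mul, poleTerm, oddHarmonic]
  push_cast
  ring_nf

lemma sum_weightSum_inv_monomial (k u : ℕ) :
    ∑ s ∈ range u, ∑ t ∈ range (s + 1), weightSum k (fun a b c =>
        ((2 * (u : ℝ) + 1) ^ a * (2 * (s : ℝ) + 2) ^ b * (2 * (t : ℝ) + 1) ^ c)⁻¹) =
      ∑ p ∈ antidiagonal u, ((2 * (p.1 : ℝ) + 1) ^ (k + 2))⁻¹ * poleTerm p.1 p.2 -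
        ((2 * (u : ℝ) + 1) ^ (k + 2))⁻¹ * oddHarmonicSum u := by
  have expand (s : ℕ) (hs : s ∈ range u) (t : ℕ) (ht : t ∈ range (s + 1)) :=
    have hsu : (s : ℝ) + 1 ≤ u := by exact_mod_cast mem_range.mp hs
    have hts : (t : ℝ) ≤ s := by exact_mod_cast mem_range_succ_iff.mp ht
    weightSum_inv_monomial (x := 2 * (u : ℝ) + 1) (y := 2 * (s : ℝ) + 2) (z := 2 * (t : ℝ) + 1)
      (by positivity) (by positivity) (by positivity) (by linarith) (by linarith) (by linarith) k
  rw [sum_congr rfl fun s hs => sum_congr rfl (expand s hs), ← sum_row_smallest, sub_eq_add_neg,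
    ← mul_neg, ← sum_row_largest]
  simp only [sum_add_distrib, ← mul_sum, sum_row_middle, mul_zero, add_zero]
  ring

lemma sum_range_weightSum_inv_monomial (k M : ℕ) :
    ∑ u ∈ range M, ∑ s ∈ range u, ∑ t ∈ range (s + 1), weightSum k (fun a b c =>
        ((2 * (u : ℝ) + 1) ^ a * (2 * (s : ℝ) + 2) ^ b * (2 * (t : ℝ) + 1) ^ c)⁻¹) =
      ∑ r ∈ range M, ((2 * (r : ℝ) + 1) ^ (k + 2))⁻¹ *
        (∑ q ∈ range (M - r), poleTerm r q - oddHarmonicSum r) := by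
  simp only [sum_weightSum_inv_monomial, sum_sub_distrib, mul_sub, mul_sum,
    sum_range_sum_antidiagonal fun r q => ((2 * (r : ℝ) + 1) ^ (k + 2))⁻¹ * poleTerm r q]

end RowSums

section ParitySums

variable {M : Type*} [AddCommMonoid M] (f : ℕ → M)

lemma sum_Ico_one_two_mul_add_one (n : ℕ) :
    ∑ m ∈ Ico 1 (2 * n + 1), f m = ∑ u ∈ range n, (f (2 * u + 1) + f (2 * u + 2)) := by
  induction n with
  | zero => simp
  | succ n ih =>
    rw [show 2 * (n + 1) + 1 = 2 * n + 1 + 1 + 1 by ring, sum_Ico_succ_top (by omega),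
      sum_Ico_succ_top (by omega), ih, sum_range_succ, add_assoc]

lemma sum_Ico_one_two_mul_add_one_ite_odd (n : ℕ) :
    ∑ m ∈ Ico 1 (2 * n + 1), (if m % 2 = 1 then f m else 0) = ∑ u ∈ range n, f (2 * u + 1) := by
  simp [sum_Ico_one_two_mul_add_one, Nat.add_mod]

lemma sum_Ico_one_two_mul_add_two_ite_odd (n : ℕ) :
    ∑ m ∈ Ico 1 (2 * n + 2), (if m % 2 = 1 then f m else 0) =
      ∑ u ∈ range (n + 1), f (2 * u + 1) := by
  rw [sum_Ico_succ_top (by omega), sum_Ico_one_two_mul_add_one_ite_odd, sum_range_succ,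
    if_pos (by omega)]

lemma sum_Ico_one_two_mul_add_one_ite_even (n : ℕ) :
    ∑ m ∈ Ico 1 (2 * n + 1), (if m % 2 = 0 then f m else 0) = ∑ u ∈ range n, f (2 * u + 2) := by
  simp [sum_Ico_one_two_mul_add_one, Nat.add_mod]

end ParitySums

section OddZeta

lemma summable_inv_odd_pow {s : ℕ} (hs : 1 < s) :
    Summable fun n : ℕ => ((2 * (n : ℝ) + 1) ^ s)⁻¹ := by
  have := (Real.summable_nat_pow_inv.mpr hs).comp_injective
    (i := fun n : ℕ => 2 * n + 1) fun a b h => by simpa using h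
  simpa [Function.comp_def] using this

lemma tValue1_eq {s : ℕ} (hs : 1 < s) :
    tValue1 s = 2 * ∑' n : ℕ, ((2 * (n : ℝ) + 1) ^ s)⁻¹ := by
  refine Tendsto.limUnder_eq ((tendsto_sum_Icc_one_iff_even fun m => ?_).mpr ?_)
  · split_ifs <;> positivity
  · refine ((summable_inv_odd_pow hs).hasSum.tendsto_sum_nat.const_mul 2).congr fun M => ?_
    rw [← Ico_add_one_right_eq_Icc, sum_Ico_one_two_mul_add_one_ite_odd, mul_sum]
    push_cast
    rfl

lemma hasSum_inv_odd_sq : HasSum (fun n : ℕ => ((2 * (n : ℝ) + 1) ^ 2)⁻¹) (Real.pi ^ 2 / 8) := by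
  have even : HasSum (fun n : ℕ => 1 / ((2 * n : ℕ) : ℝ) ^ 2) (1 / 4 * (Real.pi ^ 2 / 6)) := by
    have scale (n : ℕ) : 1 / ((2 * n : ℕ) : ℝ) ^ 2 = 1 / 4 * (1 / (n : ℝ) ^ 2) := by
      push_cast
      ring
    simpa only [scale] using hasSum_zeta_two.mul_left (1 / 4)
  have odd : HasSum (fun n : ℕ => 1 / ((2 * n + 1 : ℕ) : ℝ) ^ 2)
      (∑' n : ℕ, ((2 * (n : ℝ) + 1) ^ 2)⁻¹) := by
    simpa using (summable_inv_odd_pow one_lt_two).hasSum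
  have total := (HasSum.even_add_odd (f := fun n : ℕ => 1 / (n : ℝ) ^ 2) even odd).unique
    hasSum_zeta_two
  rw [show Real.pi ^ 2 / 8 = ∑' n : ℕ, ((2 * (n : ℝ) + 1) ^ 2)⁻¹ by linarith]
  exact (summable_inv_odd_pow one_lt_two).hasSum

lemma tValue1_two : tValue1 2 = Real.pi ^ 2 / 4 := by
  rw [tValue1_eq one_lt_two, hasSum_inv_odd_sq.tsum_eq]
  ring

end OddZeta

section TripleSums

/-- The partial sums whose limit is `tValue3 a b c`. -/
noncomputable def tPartial3 (a b c N : ℕ) : ℝ :=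
  ∑ m₁ ∈ Icc 1 N, ∑ m₂ ∈ Ico 1 m₁, ∑ m₃ ∈ Ico 1 m₂,
    if m₁ % 2 = 1 ∧ m₂ % 2 = 0 ∧ m₃ % 2 = 1 then
      8 / ((m₁ : ℝ) ^ a * (m₂ : ℝ) ^ b * (m₃ : ℝ) ^ c) else 0

lemma tPartial3_monotone (a b c : ℕ) : Monotone (tPartial3 a b c) := fun _ _ h =>
  sum_le_sum_of_subset_of_nonneg (Icc_subset_Icc_right h) fun m₁ _ _ =>
    sum_nonneg fun m₂ _ => sum_nonneg fun m₃ _ => by split_ifs <;> positivity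

lemma tPartial3_nonneg (a b c N : ℕ) : 0 ≤ tPartial3 a b c N :=
  sum_nonneg fun m₁ _ => sum_nonneg fun m₂ _ => sum_nonneg fun m₃ _ => by
    split_ifs <;> positivity

lemma tPartial3_two_mul (a b c M : ℕ) :
    tPartial3 a b c (2 * M) = 8 * ∑ u ∈ range M, ∑ s ∈ range u, ∑ t ∈ range (s + 1),
      ((2 * (u : ℝ) + 1) ^ a * (2 * (s : ℝ) + 2) ^ b * (2 * (t : ℝ) + 1) ^ c)⁻¹ := by
  simp only [tPartial3, ite_and, sum_ite_irrel, sum_const_zero, ← Ico_add_one_right_eq_Icc,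
    sum_Ico_one_two_mul_add_one_ite_odd, sum_Ico_one_two_mul_add_one_ite_even,
    sum_Ico_one_two_mul_add_two_ite_odd, mul_sum]
  push_cast
  rfl

lemma weightSum_tPartial3_two_mul (k M : ℕ) :
    weightSum k (fun a b c => tPartial3 a b c (2 * M)) =
      8 * ∑ r ∈ range M, ((2 * (r : ℝ) + 1) ^ (k + 2))⁻¹ *
        (∑ q ∈ range (M - r), poleTerm r q - oddHarmonicSum r) := by
  simp only [tPartial3_two_mul, weightSum_const_mul, weightSum_finsetSum,
    sum_range_weightSum_inv_monomial]

lemma abs_sum_range_poleTerm_sub_le (r n : ℕ) :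
    |∑ q ∈ range n, poleTerm r q - oddHarmonicSum r| ≤ Real.pi ^ 2 / 24 + √r := by
  have hnonneg := sum_nonneg fun q (_ : q ∈ range n) => poleTerm_nonneg r q
  have hle := sum_le_hasSum (range n) (fun q _ => poleTerm_nonneg r q) (hasSum_poleTerm r)
  have hsqrt := oddHarmonicSum_le_sqrt r
  have hpi := sq_nonneg Real.pi
  rw [abs_le]
  constructor <;> linarith [Real.sqrt_nonneg r]

lemma summable_inv_odd_sq_mul_sqrt :
    Summable fun r : ℕ => ((2 * (r : ℝ) + 1) ^ 2)⁻¹ * √r := by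
  have hsum : Summable fun r : ℕ => (r : ℝ) ^ (-(3 / 2) : ℝ) :=
    Real.summable_nat_rpow.mpr (by norm_num)
  refine hsum.of_nonneg_of_le (fun r => by positivity) fun r => ?_
  rcases r.eq_zero_or_pos with rfl | hr
  · simp
  have hr₀ : (0 : ℝ) < r := by exact_mod_cast hr
  calc ((2 * (r : ℝ) + 1) ^ 2)⁻¹ * √r ≤ ((r : ℝ) ^ 2)⁻¹ * √r := by gcongr; linarith
    _ = (r : ℝ) ^ (-2 : ℝ) * (r : ℝ) ^ (1 / 2 : ℝ) := by
      rw [Real.sqrt_eq_rpow, Real.rpow_neg hr₀.le, Real.rpow_two]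
    _ = (r : ℝ) ^ (-(3 / 2) : ℝ) := by
      rw [← Real.rpow_add hr₀]
      norm_num

lemma tendsto_sum_range_inv_odd_pow_mul (k : ℕ) :
    Tendsto (fun M => ∑ r ∈ range M, ((2 * (r : ℝ) + 1) ^ (k + 2))⁻¹ *
        (∑ q ∈ range (M - r), poleTerm r q - oddHarmonicSum r)) atTop
      (𝓝 ((∑' r : ℕ, ((2 * (r : ℝ) + 1) ^ (k + 2))⁻¹) * (Real.pi ^ 2 / 24))) := by
  rw [← tsum_mul_right]
  refine tendsto_sum_range_of_dominated
    (bound := fun r => ((2 * (r : ℝ) + 1) ^ 2)⁻¹ * (Real.pi ^ 2 / 24 + √r)) ?_ (fun r => ?_)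
    fun M r _ => ?_
  · simp only [mul_add]
    exact ((summable_inv_odd_pow one_lt_two).mul_right _).add summable_inv_odd_sq_mul_sqrt
  · have coefficient := ((hasSum_poleTerm r).tendsto_sum_nat.comp
      (tendsto_sub_atTop_nat r)).sub_const (oddHarmonicSum r)
    rw [add_sub_cancel_right] at coefficient
    exact coefficient.const_mul _
  · rw [norm_mul, Real.norm_of_nonneg (by positivity), Real.norm_eq_abs]
    gcongr
    · linarith [r.cast_nonneg (α := ℝ)]
    · omega
    · exact abs_sum_range_poleTerm_sub_le r _

lemma tendsto_weightSum_tPartial3 (k : ℕ) :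
    Tendsto (fun N => weightSum k fun a b c => tPartial3 a b c N) atTop
      (𝓝 (2 / 3 * tValue1 2 * tValue1 (k + 2))) := by
  have monotone : Monotone fun N => weightSum k fun a b c => tPartial3 a b c N := fun _ _ h =>
    weightSum_mono k fun a b c => tPartial3_monotone a b c h
  rw [tendsto_iff_tendsto_subseq_of_monotone monotone tendsto_two_mul_atTop, tValue1_two,
    tValue1_eq (by omega)]
  convert (tendsto_sum_range_inv_odd_pow_mul k).const_mul 8 using 1
  · exact funext fun M => weightSum_tPartial3_two_mul k M
  · ring_nf

lemma tendsto_tPartial3 {a b c : ℕ} (ha : 2 ≤ a) (hb : 1 ≤ b) (hc : 1 ≤ c) :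
    Tendsto (tPartial3 a b c) atTop (𝓝 (tValue3 a b c)) := by
  obtain ⟨i, rfl⟩ := Nat.exists_eq_add_of_le' ha
  obtain ⟨j, rfl⟩ := Nat.exists_eq_add_of_le' hb
  obtain ⟨l, rfl⟩ := Nat.exists_eq_add_of_le' hc
  have hbdd : BddAbove (Set.range (tPartial3 (i + 2) (j + 1) (l + 1))) :=
    (tendsto_weightSum_tPartial3 (i + (j + l))).bddAbove_range.range_mono _ fun N =>
      le_weightSum (fun a b c => tPartial3_nonneg a b c N) i j l
  exact tendsto_nhds_limUnder ⟨_, tendsto_atTop_ciSup (tPartial3_monotone _ _ _) hbdd⟩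

end TripleSums

end

/-- Kaneko–Tsumura Theorem 3.3: for `w ≥ 4`,
`∑_{a+b+c=w, a≥2} T(a,b,c) + ∑_{a+b=w−1, a≥2} T(a,b,1) = (2/3) T(2) T(w−2)`. -/
theorem kaneko_tsumura_thm33 (w : ℕ) (hw : 4 ≤ w) :
    (∑ a ∈ Finset.Icc 2 (w - 2), ∑ b ∈ Finset.Icc 1 (w - a - 1),
        tValue3 a b (w - a - b))
      + ∑ a ∈ Finset.Icc 2 (w - 2), tValue3 a (w - 1 - a) 1
      = 2 / 3 * tValue1 2 * tValue1 (w - 2) := by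
  obtain ⟨k, rfl⟩ := Nat.exists_eq_add_of_le' hw
  have termwise := tendsto_weightSum (k := k) fun _ _ _ => tendsto_tPartial3
  exact (weightSum_eq_sum_Icc k tValue3).symm.trans
    (tendsto_nhds_unique termwise (tendsto_weightSum_tPartial3 k))
end
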